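/- For any α ∈ ℕR_λ^+ there exists a decomposition α = σ^(1) + … + σ^(r) with all σ^(t) ∈ Σ_λ which every other decomposition of α as a sum of elements of Σ_λ refines: that is, whenever α = Σ_{j=1}^n β^(j) with all β^(j) ∈ Σ_λ, there is a partition {1,…,n} = P_1 ∪ … ∪ P_r into disjoint subsets with σ^(t) = Σ_{j∈P_t} β^(j) for each t. -/

import Mathlib

open scoped BigOperators

noncomputable section

/-- A quiver with a finite vertex set `I` and a finite arrow set `A`;
`h a` and `t a` are the head and the tail of the arrow `a`. -/
structure FinQuiver where
  I : Type
  [fintypeI : Fintype I]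
  [decEqI : DecidableEq I]
  A : Type
  [fintypeA : Fintype A]
  h : A → I
  t : A → I

attribute [instance] FinQuiver.fintypeI FinQuiver.decEqI FinQuiver.fintypeA

namespace FinQuiver

variable (Q : FinQuiver)

/-- Arrows of the double quiver `Q̄` : every arrow `a : i → j` of `Q` (as `Sum.inl a`)
together with a reverse arrow `a* : j → i` (as `Sum.inr a`). -/
@[reducible] def DA : Type := Q.A ⊕ Q.A

instance : Fintype Q.DA := inferInstanceAs (Fintype (Q.A ⊕ Q.A))

/-- Head of an arrow of the double quiver. -/
@[reducible] def dh : Q.DA → Q.I := fun a => match a with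
  | Sum.inl a => Q.h a
  | Sum.inr a => Q.t a

/-- Tail of an arrow of the double quiver. -/
@[reducible] def dt : Q.DA → Q.I := fun a => match a with
  | Sum.inl a => Q.t a
  | Sum.inr a => Q.h a

/-- The symmetric bilinear form
`(α,β) = ∑_{i∈I} 2 α_i β_i − ∑_{a∈Q̄} α_{h(a)} β_{t(a)}` on `ℤ^I`. -/
def bil (α β : Q.I → ℤ) : ℤ :=
  (∑ i, 2 * α i * β i) - ∑ a : Q.DA, α (Q.dh a) * β (Q.dt a)

/-- `p(α) = 1 − q(α) = 1 − α·α + ∑_{a ∈ Q} α_{t(a)} α_{h(a)}`. -/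
def pp (α : Q.I → ℤ) : ℤ :=
  1 - (∑ i, α i * α i) + ∑ a : Q.A, α (Q.t a) * α (Q.h a)

/-- The coordinate vector `ε_i` at a vertex `i`. -/
def ev (i : Q.I) : Q.I → ℤ := fun j => if j = i then 1 else 0

/-- The coordinate vector of a vertex, as a vector of natural numbers. -/
def evN (i : Q.I) : Q.I → ℕ := fun j => if j = i then 1 else 0

/-- A vertex is loopfree if no arrow has both its head and its tail there. -/
def Loopfree (i : Q.I) : Prop := ∀ a : Q.A, ¬ (Q.h a = i ∧ Q.t a = i)

/-- The reflection `s_i(α) = α − (α,ε_i) ε_i` at a (loopfree) vertex `i`. -/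
def refl (i : Q.I) (α : Q.I → ℤ) : Q.I → ℤ := α - Q.bil α (Q.ev i) • Q.ev i

/-- Two vertices are joined by some arrow. -/
def Adj (i j : Q.I) : Prop :=
  ∃ a : Q.A, (Q.h a = i ∧ Q.t a = j) ∨ (Q.h a = j ∧ Q.t a = i)

/-- The quiver is connected. -/
def Connected : Prop := ∀ i j : Q.I, Relation.ReflTransGen Q.Adj i j

/-- The support of the vector `α` is connected in `Q`. -/
def SuppConnected (α : Q.I → ℤ) : Prop :=
  ∀ i j : Q.I, α i ≠ 0 → α j ≠ 0 →
    Relation.ReflTransGen (fun x y => α x ≠ 0 ∧ α y ≠ 0 ∧ Q.Adj x y) i j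

/-- The fundamental region: nonzero nonnegative vectors with connected support
such that `(α, ε_i) ≤ 0` for every vertex `i`. -/
def InFund (α : Q.I → ℤ) : Prop :=
  α ≠ 0 ∧ (∀ i, 0 ≤ α i) ∧ Q.SuppConnected α ∧ ∀ i, Q.bil α (Q.ev i) ≤ 0

/-- The roots of the Kac root system attached to `Q` : the real roots form the orbit
of the simple roots (coordinate vectors at loopfree vertices) under the reflections at
loopfree vertices, and the imaginary roots form the orbit of `±(fundamental region)`
under these reflections. -/
inductive IsRoot : (Q.I → ℤ) → Prop
  | simple (i : Q.I) (hi : Q.Loopfree i) : IsRoot (Q.ev i)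
  | fund (α : Q.I → ℤ) (hα : Q.InFund α) : IsRoot α
  | neg_fund (α : Q.I → ℤ) (hα : Q.InFund α) : IsRoot (-α)
  | reflect (i : Q.I) (hi : Q.Loopfree i) (α : Q.I → ℤ) (hα : IsRoot α) :
      IsRoot (Q.refl i α)

/-- Positive roots: roots all of whose components are nonnegative. -/
def IsPosRoot (α : Q.I → ℤ) : Prop := Q.IsRoot α ∧ (∀ i, 0 ≤ α i) ∧ α ≠ 0

/-- The Tits form is positive semidefinite. -/
def PosSemidef : Prop := ∀ α : Q.I → ℤ, 0 ≤ Q.bil α α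

/-- The Tits form is positive definite. -/
def PosDef : Prop := Q.PosSemidef ∧ ∀ α : Q.I → ℤ, Q.bil α α = 0 → α = 0

/-- Dynkin quivers: connected, with positive definite Tits form. -/
def IsDynkin : Prop := Q.Connected ∧ Q.PosDef

/-- Extended Dynkin quivers: connected, with positive semidefinite but not
positive definite Tits form. -/
def IsExtDynkin : Prop := Q.Connected ∧ Q.PosSemidef ∧ ¬ Q.PosDef

/-- `δ` is the minimal positive imaginary root of an extended Dynkin quiver:
the minimal nonzero nonnegative vector in the radical of the Tits form. -/
def IsMinImag (δ : Q.I → ℤ) : Prop :=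
  (∀ i, 0 ≤ δ i) ∧ δ ≠ 0 ∧ (∀ i, Q.bil δ (Q.ev i) = 0) ∧
    ∀ β : Q.I → ℤ, (∀ i, 0 ≤ β i) → β ≠ 0 → (∀ i, Q.bil β (Q.ev i) = 0) →
      ∀ i, δ i ≤ β i

/-- The subquiver of `Q` on a subset `S` of vertices and a subset `B` of arrows. -/
def restrict (S : Set Q.I) (B : Set Q.A) (hh : ∀ a ∈ B, Q.h a ∈ S)
    (ht : ∀ a ∈ B, Q.t a ∈ S) : FinQuiver :=
  { I := S
    fintypeI := Fintype.ofFinite S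
    decEqI := Classical.decEq _
    A := B
    fintypeA := Fintype.ofFinite B
    h := fun a => ⟨Q.h a.1, hh a.1 a.2⟩
    t := fun a => ⟨Q.t a.1, ht a.1 a.2⟩ }

/-- The support quiver of a vector: the full subquiver on the support of `β`. -/
def suppQuiver (β : Q.I → ℤ) : FinQuiver :=
  Q.restrict {i | β i ≠ 0} {a | β (Q.h a) ≠ 0 ∧ β (Q.t a) ≠ 0}
    (fun _ ha => ha.1) (fun _ ha => ha.2)

/-- A dimension vector (of natural numbers), viewed in `ℤ^I`. -/
def toZ (α : Q.I → ℕ) : Q.I → ℤ := fun i => (α i : ℤ)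

/-- An oriented cycle in the double quiver `Q̄`, consisting of `n+1` arrows,
the tail of each arrow being the head of the (cyclically) next one. -/
structure Cyc (Q' : FinQuiver) where
  n : ℕ
  ar : Fin (n + 1) → Q'.DA
  compat : ∀ i : Fin (n + 1), Q'.dt (ar i) = Q'.dh (ar (i + 1))

section WithField

variable (K : Type) [Field K]

/-- `λ·α = ∑_i λ_i α_i`. -/
def pair (l : Q.I → K) (α : Q.I → ℤ) : K := ∑ i, l i * (α i : K)

/-- `R_λ^+`, the set of positive roots `α` with `λ·α = 0`. -/
def Rplus (l : Q.I → K) : Set (Q.I → ℤ) :=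
  {α | Q.IsPosRoot α ∧ Q.pair K l α = 0}

/-- `ℕ R_λ^+`, the set of sums (including the empty sum `0`) of elements of `R_λ^+`. -/
def NRplus (l : Q.I → K) : Set (Q.I → ℤ) :=
  (AddSubmonoid.closure (Q.Rplus K l) : AddSubmonoid (Q.I → ℤ))

/-- `Σ_λ` : the elements `α ∈ R_λ^+` with `p(α) > ∑ p(β⁽ᵗ⁾)` for every decomposition
of `α` as a sum of at least two elements `β⁽ᵗ⁾` of `R_λ^+`. -/
def SigmaSet (l : Q.I → K) : Set (Q.I → ℤ) :=
  {α | α ∈ Q.Rplus K l ∧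
    ∀ (n : ℕ) (β : Fin n → (Q.I → ℤ)), 2 ≤ n → (∀ j, β j ∈ Q.Rplus K l) →
      α = ∑ j, β j → (∑ j, Q.pp (β j)) < Q.pp α}

/-- The dual reflection `r_i(λ)_j = λ_j − (ε_i,ε_j) λ_i`. -/
def coRefl (i : Q.I) (l : Q.I → K) : Q.I → K :=
  fun j => l j - (Q.bil (Q.ev i) (Q.ev j) : ℤ) * l i

/-- A single admissible reflection applied to the pair `(λ, α)`:
a reflection at a loopfree vertex `i` with `λ_i ≠ 0`. -/
def AdmStep (x y : (Q.I → K) × (Q.I → ℤ)) : Prop :=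
  ∃ i : Q.I, Q.Loopfree i ∧ x.1 i ≠ 0 ∧ y.1 = Q.coRefl K i x.1 ∧ y.2 = Q.refl i x.2

/-- `(ν,β)` is obtained from `(λ,α)` by a sequence of admissible reflections:
the two pairs lie in the same class of the equivalence relation generated by
admissible reflections. -/
def AdmEquiv (x y : (Q.I → K) × (Q.I → ℤ)) : Prop :=
  Relation.EqvGen (Q.AdmStep K) x y

/-- The space `Rep(Q̄,α)` of representations of the double quiver. -/
def Rep (α : Q.I → ℕ) : Type :=
  ∀ a : Q.DA, Matrix (Fin (α (Q.dh a))) (Fin (α (Q.dt a))) K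

/-- The moment map
`μ_α(x)_i = ∑_{a∈Q, h(a)=i} x_a x_{a*} − ∑_{a∈Q, t(a)=i} x_{a*} x_a`. -/
def moment (α : Q.I → ℕ) (x : Q.Rep K α) (i : Q.I) :
    Matrix (Fin (α i)) (Fin (α i)) K :=
  (∑ a : Q.A, if h : Q.h a = i then
      (x (Sum.inl a) * x (Sum.inr a)).submatrix
        (Fin.cast (congrArg α h).symm) (Fin.cast (congrArg α h).symm)
    else 0)
  - ∑ a : Q.A, if h : Q.t a = i then
      (x (Sum.inr a) * x (Sum.inl a)).submatrix
        (Fin.cast (congrArg α h).symm) (Fin.cast (congrArg α h).symm)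
    else 0

/-- The fibre `μ_α^{-1}(λ)` of the moment map over (the central element
corresponding to) `λ`. -/
def MomentFiber (l : Q.I → K) (α : Q.I → ℕ) : Set (Q.Rep K α) :=
  {x | ∀ i : Q.I, Q.moment K α x i = l i • (1 : Matrix (Fin (α i)) (Fin (α i)) K)}

/-- The group `∏_i GL(α_i,K)`; it acts on `Rep(Q̄,α)` by conjugation, with the same
orbits and the same invariant functions as `G(α) = (∏_i GL(α_i,K))/K^*`. -/
def Gl (α : Q.I → ℕ) : Type := ∀ i : Q.I, Matrix.GeneralLinearGroup (Fin (α i)) K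

/-- The conjugation action of `∏_i GL(α_i,K)` on `Rep(Q̄,α)`. -/
def glAct (α : Q.I → ℕ) (g : Q.Gl K α) (x : Q.Rep K α) : Q.Rep K α :=
  fun a => (g (Q.dh a) : Matrix (Fin (α (Q.dh a))) (Fin (α (Q.dh a))) K) * x a *
    (((g (Q.dt a))⁻¹ : Matrix.GeneralLinearGroup (Fin (α (Q.dt a))) K) :
      Matrix (Fin (α (Q.dt a))) (Fin (α (Q.dt a))) K)

/-- Coordinates on `Rep(Q̄,α)`: matrix entries. -/
def Coords (α : Q.I → ℕ) : Type :=
  Σ a : Q.DA, Fin (α (Q.dh a)) × Fin (α (Q.dt a))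

/-- The coordinate ring `K[V]` of a subset `V` of `Rep(Q̄,α)` : the algebra of
`K`-valued functions on `V` which are restrictions of polynomial functions. -/
def fnRing (α : Q.I → ℕ) (V : Set (Q.Rep K α)) : Subalgebra K (↥V → K) :=
  (MvPolynomial.aeval
    (fun c : Q.Coords α => fun v : ↥V => v.1 c.1 c.2.1 c.2.2) :
    MvPolynomial (Q.Coords α) K →ₐ[K] (↥V → K)).range

end WithField

end FinQuiver

/-- The subalgebra of functions invariant under a relation (e.g. the orbit
relation of a group action). -/
def relInv (K : Type) [Field K] {V : Type} (R : V → V → Prop) :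
    Subalgebra K (V → K) where
  carrier := {f | ∀ x y : V, R x y → f x = f y}
  mul_mem' := by
    intro f g hf hg x y hxy
    simp only [Pi.mul_apply, hf x y hxy, hg x y hxy]
  one_mem' := fun x y _ => rfl
  add_mem' := by
    intro f g hf hg x y hxy
    simp only [Pi.add_apply, hf x y hxy, hg x y hxy]
  zero_mem' := fun x y _ => rfl
  algebraMap_mem' := fun c x y _ => rfl

namespace FinQuiver

variable (Q : FinQuiver) (K : Type) [Field K]

/-- The coordinate ring of the Marsden–Weinstein reduction
`N(λ,α) = μ_α^{-1}(λ) ⫽ G(α)` : the `G(α)`-invariant functions in the coordinate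
ring of `μ_α^{-1}(λ)`.  Two such reductions are isomorphic as (affine) varieties
exactly when these `K`-algebras are isomorphic. -/
def InvRing (l : Q.I → K) (α : Q.I → ℕ) :
    Subalgebra K (↥(Q.MomentFiber K l α) → K) :=
  Q.fnRing K α (Q.MomentFiber K l α) ⊓
    relInv K (fun x y : ↥(Q.MomentFiber K l α) =>
      ∃ g : Q.Gl K α, y.1 = Q.glAct K α g x.1)

/-- Index type for a product `∏_t X_t^{m_t}`. -/
@[reducible] def SymIdx (s : ℕ) (m : Fin s → ℕ) : Type := Σ t : Fin s, Fin (m t)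

/-- The product `∏_{t} Rep(Q̄, d_t)^{m_t}` of representation spaces. -/
def SymRep (s : ℕ) (m : Fin s → ℕ) (d : Fin s → (Q.I → ℕ)) : Type :=
  ∀ p : SymIdx s m, Q.Rep K (d p.1)

/-- The product `∏_t μ_{d_t}^{-1}(λ)^{m_t}` of moment map fibres. -/
def SymFiber (s : ℕ) (m : Fin s → ℕ) (d : Fin s → (Q.I → ℕ)) (l : Q.I → K) :
    Set (Q.SymRep K s m d) :=
  {x | ∀ p : SymIdx s m, x p ∈ Q.MomentFiber K l (d p.1)}

/-- Polynomial functions on the product of fibres. -/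
def symFnRing (s : ℕ) (m : Fin s → ℕ) (d : Fin s → (Q.I → ℕ)) (l : Q.I → K) :
    Subalgebra K (↥(Q.SymFiber K s m d l) → K) :=
  (MvPolynomial.aeval
    (fun c : Σ p : SymIdx s m, Q.Coords (d p.1) =>
      fun v : ↥(Q.SymFiber K s m d l) => v.1 c.1 c.2.1 c.2.2.1 c.2.2.2) :
    MvPolynomial (Σ p : SymIdx s m, Q.Coords (d p.1)) K →ₐ[K]
      (↥(Q.SymFiber K s m d l) → K)).range

/-- The componentwise action of the product of the groups `∏ GL(d_t)^{m_t}`. -/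
def symGlAct (s : ℕ) (m : Fin s → ℕ) (d : Fin s → (Q.I → ℕ))
    (g : ∀ p : SymIdx s m, Q.Gl K (d p.1)) (x : Q.SymRep K s m d) :
    Q.SymRep K s m d :=
  fun p => Q.glAct K (d p.1) (g p) (x p)

/-- The action of `∏_t S_{m_t}` permuting the factors of each `X_t^{m_t}`. -/
def symPermAct (s : ℕ) (m : Fin s → ℕ) (d : Fin s → (Q.I → ℕ))
    (π : ∀ t : Fin s, Equiv.Perm (Fin (m t))) (x : Q.SymRep K s m d) :
    Q.SymRep K s m d :=
  fun p => x ⟨p.1, π p.1 p.2⟩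

/-- The coordinate ring of the product of symmetric products
`∏_t S^{m_t} N(λ, d_t)` of Marsden–Weinstein reductions: functions on
`∏_t μ_{d_t}^{-1}(λ)^{m_t}` which are polynomial, invariant under all the groups
`G(d_t)` acting on the separate factors, and symmetric under permutations of the
`m_t` factors of each type `t`. -/
def SymInvRing (s : ℕ) (m : Fin s → ℕ) (d : Fin s → (Q.I → ℕ)) (l : Q.I → K) :
    Subalgebra K (↥(Q.SymFiber K s m d l) → K) :=
  Q.symFnRing K s m d l ⊓
    relInv K (fun x y : ↥(Q.SymFiber K s m d l) =>
      ∃ g : ∀ p : SymIdx s m, Q.Gl K (d p.1), y.1 = Q.symGlAct K s m d g x.1) ⊓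
    relInv K (fun x y : ↥(Q.SymFiber K s m d l) =>
      ∃ π : ∀ t : Fin s, Equiv.Perm (Fin (m t)), y.1 = Q.symPermAct K s m d π x.1)

/-- The trace function `tr_p` of an oriented cycle `p` in `Q̄` :
`tr_p(x) = tr(x_{a_1} ⋯ x_{a_ℓ})`, written out via matrix entries. -/
def cycTr (α : Q.I → ℕ) (p : Q.Cyc) (x : Q.Rep K α) : K :=
  ∑ c : ∀ i : Fin (p.n + 1), Fin (α (Q.dh (p.ar i))),
    ∏ i : Fin (p.n + 1),
      x (p.ar i) (c i) (Fin.cast (congrArg α (p.compat i)).symm (c (i + 1)))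

/-- `U` is a subrepresentation of the `Π^λ`-module given by the point
`x ∈ Rep(Q̄,α)` : a collection of subspaces stable under all the maps `x_a`. -/
def SubRep (α : Q.I → ℕ) (x : Q.Rep K α)
    (U : ∀ i : Q.I, Submodule K (Fin (α i) → K)) : Prop :=
  ∀ a : Q.DA, ∀ v ∈ U (Q.dt a), (x a).mulVec v ∈ U (Q.dh a)

/-- The module given by `x` has the simple module `S_{i₀}` (dimension vector
`ε_{i₀}`, all arrows acting as zero) as a composition factor: it has a subquotient
of dimension vector `ε_{i₀}` on which all arrows act as zero. -/
def HasSFactor (α : Q.I → ℕ) (i0 : Q.I) (x : Q.Rep K α) : Prop :=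
  ∃ U W : ∀ i : Q.I, Submodule K (Fin (α i) → K),
    Q.SubRep K α x U ∧ Q.SubRep K α x W ∧ (∀ i, U i ≤ W i) ∧
    (∀ i, Module.finrank K (W i) =
      Module.finrank K (U i) + (if i = i0 then 1 else 0)) ∧
    (∀ a : Q.DA, Q.dh a = i0 → Q.dt a = i0 →
      ∀ v ∈ W (Q.dt a), (x a).mulVec v ∈ U (Q.dh a))

/-- `W/U` is a simple subquotient of the module given by `x`; the simple
subquotients of a module are, up to isomorphism, exactly its composition factors. -/
def SimpleSubquot (α : Q.I → ℕ) (x : Q.Rep K α)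
    (U W : ∀ i : Q.I, Submodule K (Fin (α i) → K)) : Prop :=
  Q.SubRep K α x U ∧ Q.SubRep K α x W ∧ (∀ i, U i ≤ W i) ∧ U ≠ W ∧
    ∀ V : ∀ i : Q.I, Submodule K (Fin (α i) → K),
      Q.SubRep K α x V → (∀ i, U i ≤ V i) → (∀ i, V i ≤ W i) → V = U ∨ V = W

/-- The direct sum map `∏_{j=1}^m Rep(Q̄,δ) → Rep(Q̄,mδ)` (block diagonal). -/
def dsMap (δ : Q.I → ℕ) (m : ℕ) (y : Fin m → Q.Rep K δ) :
    Q.Rep K (fun i => m * δ i) :=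
  fun a => Matrix.of fun r c =>
    if (finProdFinEquiv.symm r).1 = (finProdFinEquiv.symm c).1 then
      y (finProdFinEquiv.symm r).1 a (finProdFinEquiv.symm r).2
        (finProdFinEquiv.symm c).2
    else 0

end FinQuiver


namespace FinQuiver

section Part1

section Basics

variable {Q : FinQuiver}

lemma bil_add_left (x y z : Q.I → ℤ) : Q.bil (x + y) z = Q.bil x z + Q.bil y z := by
  simp only [bil, Pi.add_apply, mul_add, add_mul, Finset.sum_add_distrib]; ring

lemma bil_smul_left (c : ℤ) (x z : Q.I → ℤ) : Q.bil (c • x) z = c * Q.bil x z := by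
  simp only [bil, Pi.smul_apply, smul_eq_mul, mul_sub, Finset.mul_sum]
  congr 1 <;> (refine Finset.sum_congr rfl fun i _ => ?_; ring)

lemma bil_comm (x y : Q.I → ℤ) : Q.bil x y = Q.bil y x := by
  simp only [bil, Fintype.sum_sum_type]
  have h1 : ∑ i, 2 * x i * y i = ∑ i, 2 * y i * x i :=
    Finset.sum_congr rfl fun i _ => by ring
  have h2 : ∑ a : Q.A, x (Q.h a) * y (Q.t a) = ∑ a : Q.A, y (Q.t a) * x (Q.h a) :=
    Finset.sum_congr rfl fun i _ => by ring
  have h3 : ∑ a : Q.A, x (Q.t a) * y (Q.h a) = ∑ a : Q.A, y (Q.h a) * x (Q.t a) :=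
    Finset.sum_congr rfl fun i _ => by ring
  rw [h1, h2, h3]; ring

lemma bil_add_right (x y z : Q.I → ℤ) : Q.bil x (y + z) = Q.bil x y + Q.bil x z := by
  rw [bil_comm, bil_add_left, bil_comm y, bil_comm z]

lemma bil_smul_right (c : ℤ) (x z : Q.I → ℤ) : Q.bil x (c • z) = c * Q.bil x z := by
  rw [bil_comm, bil_smul_left, bil_comm]

lemma bil_neg_left (x z : Q.I → ℤ) : Q.bil (-x) z = - Q.bil x z := by
  have := bil_smul_left (-1) x z
  simpa using this

lemma bil_neg_right (x z : Q.I → ℤ) : Q.bil x (-z) = - Q.bil x z := by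
  rw [bil_comm, bil_neg_left, bil_comm]

lemma bil_sub_left (x y z : Q.I → ℤ) : Q.bil (x - y) z = Q.bil x z - Q.bil y z := by
  rw [sub_eq_add_neg, bil_add_left, bil_neg_left]; ring

lemma bil_sub_right (x y z : Q.I → ℤ) : Q.bil x (y - z) = Q.bil x y - Q.bil x z := by
  rw [sub_eq_add_neg, bil_add_right, bil_neg_right]; ring

lemma bil_zero_left (z : Q.I → ℤ) : Q.bil 0 z = 0 := by
  simpa using bil_smul_left 0 0 z

lemma bil_zero_right (z : Q.I → ℤ) : Q.bil z 0 = 0 := by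
  rw [bil_comm, bil_zero_left]

lemma bil_sum_left {ι : Type*} (s : Finset ι) (f : ι → Q.I → ℤ) (z : Q.I → ℤ) :
    Q.bil (∑ j ∈ s, f j) z = ∑ j ∈ s, Q.bil (f j) z := by
  classical
  induction s using Finset.induction_on with
  | empty => simp [bil_zero_left]
  | insert a s ha ih => rw [Finset.sum_insert ha, Finset.sum_insert ha, bil_add_left, ih]

lemma bil_sum_right {ι : Type*} (s : Finset ι) (f : ι → Q.I → ℤ) (z : Q.I → ℤ) :
    Q.bil z (∑ j ∈ s, f j) = ∑ j ∈ s, Q.bil z (f j) := by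
  rw [bil_comm, bil_sum_left]; exact Finset.sum_congr rfl fun i _ => bil_comm _ _

lemma ev_self (i : Q.I) : Q.ev i i = 1 := by simp [ev]

lemma ev_ne {i j : Q.I} (h : j ≠ i) : Q.ev i j = 0 := by simp [ev, h]

lemma ev_nonneg (i j : Q.I) : 0 ≤ Q.ev i j := by
  unfold ev; split_ifs <;> simp

lemma ev_ne_zero (i : Q.I) : Q.ev i ≠ 0 := fun h => by
  have := congrFun h i; simp [ev_self] at this

lemma eq_sum_ev (x : Q.I → ℤ) : x = ∑ i, x i • Q.ev i := by
  funext j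
  simp [Finset.sum_apply, ev]

lemma bil_eq_left (x y : Q.I → ℤ) : Q.bil x y = ∑ i, x i * Q.bil (Q.ev i) y := by
  conv_lhs => rw [eq_sum_ev x]
  rw [bil_sum_left]
  exact Finset.sum_congr rfl fun i _ => bil_smul_left _ _ _

lemma bil_eq_right (x y : Q.I → ℤ) : Q.bil x y = ∑ i, y i * Q.bil x (Q.ev i) := by
  rw [bil_comm, bil_eq_left]
  exact Finset.sum_congr rfl fun i _ => by rw [bil_comm]

lemma bil_ev_le {i j : Q.I} (h : i ≠ j) : Q.bil (Q.ev i) (Q.ev j) ≤ 0 := by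
  unfold bil
  have h1 : ∑ k, 2 * Q.ev i k * Q.ev j k = 0 := by
    refine Finset.sum_eq_zero fun k _ => ?_
    by_cases hk : k = i
    · subst hk; simp [ev, h]
    · simp [ev, hk]
  rw [h1]
  have : 0 ≤ ∑ a : Q.DA, Q.ev i (Q.dh a) * Q.ev j (Q.dt a) :=
    Finset.sum_nonneg fun a _ => mul_nonneg (ev_nonneg _ _) (ev_nonneg _ _)
  linarith

lemma bil_self_even (x : Q.I → ℤ) : Q.bil x x = 2 - 2 * Q.pp x := by
  simp only [bil, pp, Fintype.sum_sum_type]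
  have h1 : ∑ i, 2 * x i * x i = 2 * ∑ i, x i * x i := by
    rw [Finset.mul_sum]; exact Finset.sum_congr rfl fun i _ => by ring
  have h2 : ∑ a : Q.A, x (Q.h a) * x (Q.t a) = ∑ a : Q.A, x (Q.t a) * x (Q.h a) :=
    Finset.sum_congr rfl fun i _ => by ring
  rw [h1, h2]; ring

lemma bil_ev_self (i : Q.I) :
    Q.bil (Q.ev i) (Q.ev i) = 2 - 2 * ∑ a : Q.A, Q.ev i (Q.t a) * Q.ev i (Q.h a) := by
  rw [bil_self_even, pp]
  have : ∑ k, Q.ev i k * Q.ev i k = 1 := by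
    rw [Finset.sum_eq_single i] <;> simp [ev]
  rw [this]; ring

lemma bil_ev_self_loopfree {i : Q.I} (hi : Q.Loopfree i) : Q.bil (Q.ev i) (Q.ev i) = 2 := by
  rw [bil_ev_self, Finset.sum_eq_zero]
  · simp
  · intro a _
    have := hi a
    by_cases h1 : Q.t a = i
    · have h2 : Q.h a ≠ i := fun h => this ⟨h, h1⟩
      simp [ev, h2]
    · simp [ev, h1]

lemma bil_ev_self_loop {i : Q.I} (hi : ¬ Q.Loopfree i) : Q.bil (Q.ev i) (Q.ev i) ≤ 0 := by
  unfold Loopfree at hi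
  push Not at hi
  obtain ⟨a, h1, h2⟩ := hi
  rw [bil_ev_self]
  have : Q.ev i (Q.t a) * Q.ev i (Q.h a) ≤ ∑ a : Q.A, Q.ev i (Q.t a) * Q.ev i (Q.h a) :=
    Finset.single_le_sum (f := fun a => Q.ev i (Q.t a) * Q.ev i (Q.h a))
      (fun a _ => mul_nonneg (ev_nonneg _ _) (ev_nonneg _ _)) (Finset.mem_univ a)
  rw [h1, h2, ev_self] at this
  linarith

lemma bil_ev_le_two (i : Q.I) : Q.bil (Q.ev i) (Q.ev i) ≤ 2 := by
  by_cases h : Q.Loopfree i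
  · rw [bil_ev_self_loopfree h]
  · have := bil_ev_self_loop h; linarith

lemma bil_nonpos_of_nonneg {x y : Q.I → ℤ} (hy : ∀ i, 0 ≤ y i)
    (hx : ∀ i, y i ≠ 0 → Q.bil x (Q.ev i) ≤ 0) : Q.bil x y ≤ 0 := by
  rw [bil_eq_right]
  refine Finset.sum_nonpos fun i _ => ?_
  by_cases h : y i = 0
  · simp [h]
  · exact mul_nonpos_of_nonneg_of_nonpos (hy i) (hx i h)

/-- if `x ≥ 0` and `(x, ε_i) > 0`, then `i` is loopfree and in the support. -/
lemma pos_of_bil_pos {x : Q.I → ℤ} (hx : ∀ i, 0 ≤ x i) {i : Q.I} (h : 0 < Q.bil x (Q.ev i)) :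
    Q.Loopfree i ∧ 0 < x i := by
  have key : Q.bil x (Q.ev i) ≤ x i * Q.bil (Q.ev i) (Q.ev i) := by
    rw [bil_eq_left, ← Finset.add_sum_erase _ _ (Finset.mem_univ i)]
    have : ∑ k ∈ Finset.univ.erase i, x k * Q.bil (Q.ev k) (Q.ev i) ≤ 0 :=
      Finset.sum_nonpos fun k hk =>
        mul_nonpos_of_nonneg_of_nonpos (hx k) (bil_ev_le (Finset.ne_of_mem_erase hk))
    linarith
  have h0 := hx i
  constructor
  · by_contra hl
    have := bil_ev_self_loop hl
    nlinarith
  · rcases h0.lt_or_eq with h1 | h1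
    · exact h1
    · rw [← h1] at key; linarith

/-- two vectors with orthogonal supports pair nonpositively -/
lemma bil_nonpos_of_disjoint {x y : Q.I → ℤ} (hx : ∀ i, 0 ≤ x i) (hy : ∀ i, 0 ≤ y i)
    (h : ∀ i, x i = 0 ∨ y i = 0) : Q.bil x y ≤ 0 := by
  refine bil_nonpos_of_nonneg hy fun i hi => ?_
  by_contra hc
  push Not at hc
  have := (pos_of_bil_pos hx hc).2
  rcases h i with h | h
  · omega
  · exact hi h

lemma adj_iff {i j : Q.I} (h : i ≠ j) : Q.Adj i j ↔ Q.bil (Q.ev i) (Q.ev j) ≠ 0 := by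
  have h1 : ∑ k, 2 * Q.ev i k * Q.ev j k = 0 := by
    refine Finset.sum_eq_zero fun k _ => ?_
    by_cases hk : k = i
    · subst hk; simp [ev, h]
    · simp [ev, hk]
  have hb : Q.bil (Q.ev i) (Q.ev j) = - ∑ a : Q.DA, Q.ev i (Q.dh a) * Q.ev j (Q.dt a) := by
    unfold bil; rw [h1]; ring
  have hnn : ∀ a ∈ (Finset.univ : Finset Q.DA), 0 ≤ Q.ev i (Q.dh a) * Q.ev j (Q.dt a) :=
    fun a _ => mul_nonneg (ev_nonneg _ _) (ev_nonneg _ _)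
  rw [hb, neg_ne_zero, Ne, Finset.sum_eq_zero_iff_of_nonneg hnn]
  push Not
  constructor
  · rintro ⟨a, ⟨h1, h2⟩ | ⟨h1, h2⟩⟩
    · exact ⟨Sum.inl a, Finset.mem_univ _, by simp [h1, h2, ev_self]⟩
    · exact ⟨Sum.inr a, Finset.mem_univ _, by simp [h1, h2, ev_self]⟩
  · rintro ⟨a | a, -, ha⟩
    · refine ⟨a, Or.inl ⟨?_, ?_⟩⟩
      · by_contra hc; simp [ev, hc] at ha
      · by_contra hc; simp [ev, hc] at ha
    · refine ⟨a, Or.inr ⟨?_, ?_⟩⟩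
      · by_contra hc; simp [ev, hc] at ha
      · by_contra hc; simp [ev, hc] at ha

/-- Algebraic connectedness of the support. -/
def Conn (Q : FinQuiver) (x : Q.I → ℤ) : Prop :=
  ∀ T : Set Q.I, (∀ i ∈ T, ∀ j ∉ T, x i ≠ 0 → x j ≠ 0 → Q.bil (Q.ev i) (Q.ev j) = 0) →
    (∀ i ∈ T, x i = 0) ∨ (∀ j ∉ T, x j = 0)

lemma conn_iff (x : Q.I → ℤ) : Q.SuppConnected x ↔ Q.Conn x := by
  constructor
  · intro h T hT
    by_contra hc
    push Not at hc
    obtain ⟨⟨i, hi, hxi⟩, j, hj, hxj⟩ := hc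
    have hp := h i j hxi hxj
    have : ∀ k, Relation.ReflTransGen (fun x_1 y => x x_1 ≠ 0 ∧ x y ≠ 0 ∧ Q.Adj x_1 y) i k →
        k ∈ T := by
      intro k hk
      induction hk with
      | refl => exact hi
      | @tail b c hb hbc ih =>
        by_contra hcT
        have hbc' : b ≠ c := fun h => hcT (h ▸ ih)
        exact (adj_iff hbc').1 hbc.2.2 (hT b ih c hcT hbc.1 hbc.2.1)
    exact hj (this j hp)
  · intro h i j hxi hxj
    rcases h {k | Relation.ReflTransGen (fun a b => x a ≠ 0 ∧ x b ≠ 0 ∧ Q.Adj a b) i k} (by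
      intro a ha b hb hxa hxb
      by_contra hc
      have hab : a ≠ b := fun h => hb (h ▸ ha)
      exact hb (Relation.ReflTransGen.tail ha ⟨hxa, hxb, (adj_iff hab).2 hc⟩)) with h1 | h1
    · exact absurd (h1 i Relation.ReflTransGen.refl) hxi
    · by_contra hc
      exact hxj (h1 j hc)

/-- height -/
def ht (Q : FinQuiver) (x : Q.I → ℤ) : ℤ := ∑ i, x i

lemma ht_add (x y : Q.I → ℤ) : Q.ht (x + y) = Q.ht x + Q.ht y := by
  simp [ht, Finset.sum_add_distrib]

lemma ht_smul (c : ℤ) (x : Q.I → ℤ) : Q.ht (c • x) = c * Q.ht x := by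
  simp [ht, Finset.mul_sum]

lemma ht_sub (x y : Q.I → ℤ) : Q.ht (x - y) = Q.ht x - Q.ht y := by
  simp [ht, Finset.sum_sub_distrib]

lemma ht_ev (i : Q.I) : Q.ht (Q.ev i) = 1 := by simp [ht, ev]

lemma ht_nonneg {x : Q.I → ℤ} (hx : ∀ i, 0 ≤ x i) : 0 ≤ Q.ht x :=
  Finset.sum_nonneg fun i _ => hx i

lemma ht_pos {x : Q.I → ℤ} (hx : ∀ i, 0 ≤ x i) (h0 : x ≠ 0) : 0 < Q.ht x := by
  rcases (ht_nonneg hx).lt_or_eq with h | h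
  · exact h
  · exfalso; apply h0; funext i
    exact (Finset.sum_eq_zero_iff_of_nonneg (fun i _ => hx i)).1 h.symm i (Finset.mem_univ i)

lemma ht_refl (i : Q.I) (x : Q.I → ℤ) : Q.ht (Q.refl i x) = Q.ht x - Q.bil x (Q.ev i) := by
  rw [refl, ht_sub, ht_smul, ht_ev]; ring

lemma bil_refl {i : Q.I} (hi : Q.Loopfree i) (x y : Q.I → ℤ) :
    Q.bil (Q.refl i x) (Q.refl i y) = Q.bil x y := by
  simp only [refl, bil_sub_left, bil_sub_right, bil_smul_left, bil_smul_right,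
    bil_ev_self_loopfree hi, bil_comm (Q.ev i) y]
  ring

lemma bil_refl_ev {i : Q.I} (hi : Q.Loopfree i) (x : Q.I → ℤ) :
    Q.bil (Q.refl i x) (Q.ev i) = - Q.bil x (Q.ev i) := by
  simp only [refl, bil_sub_left, bil_smul_left, bil_ev_self_loopfree hi]
  ring

lemma refl_refl {i : Q.I} (hi : Q.Loopfree i) (x : Q.I → ℤ) : Q.refl i (Q.refl i x) = x := by
  conv_lhs => rw [refl, bil_refl_ev hi]
  simp [refl]

lemma refl_add (i : Q.I) (x y : Q.I → ℤ) : Q.refl i (x + y) = Q.refl i x + Q.refl i y := by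
  simp only [refl, bil_add_left, add_smul]; abel

lemma refl_sub (i : Q.I) (x y : Q.I → ℤ) : Q.refl i (x - y) = Q.refl i x - Q.refl i y := by
  simp only [refl, bil_sub_left, sub_smul]; abel

lemma refl_zero (i : Q.I) : Q.refl i 0 = 0 := by
  simp [refl, bil_zero_left]

lemma refl_sum {ι : Type*} (i : Q.I) (s : Finset ι) (f : ι → Q.I → ℤ) :
    Q.refl i (∑ j ∈ s, f j) = ∑ j ∈ s, Q.refl i (f j) := by
  classical
  induction s using Finset.induction_on with
  | empty => simp [refl_zero]
  | insert a s ha ih => rw [Finset.sum_insert ha, Finset.sum_insert ha, refl_add, ih]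

lemma refl_apply_ne {i j : Q.I} (h : j ≠ i) (x : Q.I → ℤ) : Q.refl i x j = x j := by
  simp [refl, ev_ne h]

lemma refl_apply_self (i : Q.I) (x : Q.I → ℤ) : Q.refl i x i = x i - Q.bil x (Q.ev i) := by
  simp [refl, ev_self]

lemma pp_refl {i : Q.I} (hi : Q.Loopfree i) (x : Q.I → ℤ) : Q.pp (Q.refl i x) = Q.pp x := by
  have h1 := bil_self_even (Q.refl i x)
  have h2 := bil_self_even x
  rw [bil_refl hi] at h1
  linarith

lemma pp_add (x y : Q.I → ℤ) : Q.pp (x + y) = Q.pp x + Q.pp y - 1 - Q.bil x y := by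
  have h1 := bil_self_even (x + y)
  have h2 := bil_self_even x
  have h3 := bil_self_even y
  rw [bil_add_left, bil_add_right, bil_add_right, bil_comm y x] at h1
  linarith

end Basics

end Part1

section Part2

section Roots

variable {Q : FinQuiver}

/-- positive roots, generated by height-increasing reflections -/
inductive Good (Q : FinQuiver) : (Q.I → ℤ) → Prop
  | simple (i : Q.I) (hi : Q.Loopfree i) : Good Q (Q.ev i)
  | fund (α : Q.I → ℤ) (hα : Q.InFund α) : Good Q α
  | ascend (i : Q.I) (hi : Q.Loopfree i) (γ : Q.I → ℤ) (hγ : Good Q γ)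
      (h : Q.bil γ (Q.ev i) < 0) : Good Q (Q.refl i γ)

lemma conn_aux {γ x : Q.I → ℤ} {i : Q.I} (hx : ∀ j, γ j ≠ 0 → x j ≠ 0)
    (hx2 : ∀ j, j ≠ i → x j = γ j) (hi : x i ≠ 0)
    (h : Q.bil γ (Q.ev i) ≠ 0) (T : Set Q.I)
    (hT : ∀ a ∈ T, ∀ j ∉ T, x a ≠ 0 → x j ≠ 0 → Q.bil (Q.ev a) (Q.ev j) = 0)
    (h0 : ∀ a ∈ T, γ a = 0) : ∀ a ∈ T, x a = 0 := by
  intro a ha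
  by_cases hai : a = i
  · exfalso
    subst hai
    apply h
    rw [bil_eq_left]
    refine Finset.sum_eq_zero fun j _ => ?_
    by_cases hj : j ∈ T
    · simp [h0 j hj]
    · by_cases hγ : γ j = 0
      · simp [hγ]
      · rw [bil_comm, hT a ha j hj hi (hx j hγ)]; simp
  · rw [hx2 a hai, h0 a ha]

lemma conn_ascend {γ x : Q.I → ℤ} {i : Q.I} (hx : ∀ j, γ j ≠ 0 → x j ≠ 0)
    (hx2 : ∀ j, j ≠ i → x j = γ j) (hi : x i ≠ 0)
    (h : Q.bil γ (Q.ev i) ≠ 0) (hc : Q.Conn γ) : Q.Conn x := by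
  intro T hT
  rcases hc T (fun a ha b hb h1 h2 => hT a ha b hb (hx a h1) (hx b h2)) with h0 | h0
  · exact Or.inl (conn_aux hx hx2 hi h T hT h0)
  · right
    refine conn_aux hx hx2 hi h Tᶜ ?_ h0
    intro a ha b hb h1 h2
    rw [bil_comm]
    exact hT b (by simpa using hb) a ha h2 h1

lemma conn_ev (i : Q.I) : Q.Conn (Q.ev i) := by
  intro T _
  by_cases hi : i ∈ T
  · right; intro j hj; exact ev_ne (fun h => hj (h ▸ hi))
  · left; intro j hj; exact ev_ne (fun h => hi (h ▸ hj))

lemma Good.props {x : Q.I → ℤ} (h : Q.Good x) :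
    (∀ i, 0 ≤ x i) ∧ x ≠ 0 ∧ Q.Conn x ∧ (Q.bil x x = 2 ∨ Q.bil x x ≤ 0) := by
  induction h with
  | simple i hi => exact ⟨ev_nonneg i, ev_ne_zero i, conn_ev i, Or.inl (bil_ev_self_loopfree hi)⟩
  | fund α hα =>
    exact ⟨hα.2.1, hα.1, (conn_iff _).1 hα.2.2.1,
      Or.inr (bil_nonpos_of_nonneg hα.2.1 fun i _ => hα.2.2.2 i)⟩
  | ascend i hi γ hγ h ih =>
    obtain ⟨h0, h1, h2, h3⟩ := ih
    have hii : Q.refl i γ i = γ i - Q.bil γ (Q.ev i) := refl_apply_self i γ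
    have hpos : 0 < Q.refl i γ i := by have := h0 i; omega
    refine ⟨?_, ?_, ?_, ?_⟩
    · intro j
      by_cases hj : j = i
      · subst hj; exact hpos.le
      · rw [refl_apply_ne hj]; exact h0 j
    · intro hz; rw [hz] at hpos; simp at hpos
    · refine conn_ascend (i := i) ?_ (fun j hj => refl_apply_ne hj γ) hpos.ne' h.ne h2
      intro j hj
      by_cases hji : j = i
      · subst hji; exact hpos.ne'
      · rwa [refl_apply_ne hji]
    · rwa [bil_refl hi]

lemma Good.isPosRoot {x : Q.I → ℤ} (h : Q.Good x) : Q.IsPosRoot x := by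
  refine ⟨?_, h.props.1, h.props.2.1⟩
  induction h with
  | simple i hi => exact IsRoot.simple i hi
  | fund α hα => exact IsRoot.fund α hα
  | ascend i hi γ _ _ ih => exact IsRoot.reflect i hi γ ih

/-- the rank two claim -/
lemma claimD (N : ℕ) (IH : ∀ γ : Q.I → ℤ, Q.Good γ → Q.ht γ < N →
      ∀ i, Q.Loopfree i → γ ≠ Q.ev i → Q.Good (Q.refl i γ)) :
    ∀ n : ℕ, ∀ x : Q.I → ℤ, Q.Good x → Q.ht x < N → Q.ht x < n → ∀ i j, Q.Loopfree i →
      Q.Loopfree j → i ≠ j → Q.bil (Q.ev i) (Q.ev j) ≤ -2 → 0 < Q.bil x (Q.ev i) →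
      0 < Q.bil x (Q.ev i) + Q.bil x (Q.ev j) → ∀ k, k ≠ i → k ≠ j → x k = 0 := by
  intro n
  induction n with
  | zero => intro x hx _ h2; have := ht_nonneg hx.props.1; norm_cast at h2; omega
  | succ n ih =>
    intro x hx h1 h2 i j hi hj hij hC hA hAB k hki hkj
    by_cases hxi : x = Q.ev i
    · rw [hxi]; exact ev_ne hki
    · have hy := IH x hx h1 i hi hxi
      have hht := ht_refl i x
      have e1 : Q.bil (Q.refl i x) (Q.ev j) =
          Q.bil x (Q.ev j) - Q.bil x (Q.ev i) * Q.bil (Q.ev i) (Q.ev j) := by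
        rw [refl, bil_sub_left, bil_smul_left]
      have e2 := bil_refl_ev hi x
      have := ih (Q.refl i x) hy (by omega) (by push_cast at h2; omega) j i hj hi hij.symm
        (by rw [bil_comm]; exact hC) (by rw [e1]; nlinarith) (by rw [e1, e2]; nlinarith) k hkj hki
      rwa [refl_apply_ne hki] at this

lemma good_refl_aux : ∀ N : ℕ, ∀ γ : Q.I → ℤ, Q.Good γ → Q.ht γ < N →
      ∀ i, Q.Loopfree i → γ ≠ Q.ev i → Q.Good (Q.refl i γ) := by
  intro N
  induction N with
  | zero => intro x hx h2; have := ht_nonneg hx.props.1; norm_cast at h2; omega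
  | succ N IH =>
    intro γ hγ hN i hi hne
    rcases lt_trichotomy (Q.bil γ (Q.ev i)) 0 with ha | ha | ha
    · exact Good.ascend i hi γ hγ ha
    · rw [refl, ha]; simpa using hγ
    · cases hγ with
      | simple j hj =>
        exfalso
        have : j ≠ i := fun h => hne (by rw [h])
        have := bil_ev_le this
        omega
      | fund _ hα => exact absurd (hα.2.2.2 i) (by omega)
      | ascend j hj γ' hγ' hb =>
        by_cases hji : j = i
        · subst hji; rw [refl_refl hj]; exact hγ'
        have hht := ht_refl j γ'
        have hγN : Q.ht γ' < N := by push_cast at hN; omega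
        have hC := bil_ev_le hji
        have hii := bil_ev_self_loopfree hi
        have hjj := bil_ev_self_loopfree hj
        obtain ⟨m, hm⟩ : ∃ m, Q.bil (Q.ev j) (Q.ev i) = -m := ⟨-Q.bil (Q.ev j) (Q.ev i), by ring⟩
        have hm' : Q.bil (Q.ev i) (Q.ev j) = -m := by rw [bil_comm, hm]
        obtain ⟨b, hbb⟩ : ∃ b, Q.bil γ' (Q.ev j) = -b := ⟨-Q.bil γ' (Q.ev j), by ring⟩
        have hb0 : 0 < b := by omega
        have hγe : Q.refl j γ' = γ' + b • Q.ev j := by rw [refl, hbb]; simp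
        obtain ⟨a, haa⟩ : ∃ a, Q.bil (Q.refl j γ') (Q.ev i) = a := ⟨_, rfl⟩
        rw [haa] at ha
        have hγi : Q.bil γ' (Q.ev i) = a + b * m := by
          rw [hγe, bil_add_left, bil_smul_left, hm] at haa; linarith
        have htarget : Q.refl i (Q.refl j γ') = γ' + b • Q.ev j - a • Q.ev i := by
          conv_lhs => rw [refl, haa, hγe]
        have hm0 : 0 ≤ m := by omega
        rcases (show m = 0 ∨ m = 1 ∨ 2 ≤ m by omega) with hm1 | hm1 | hm1
        · subst hm1
          have hne' : γ' ≠ Q.ev i := by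
            rintro rfl; omega
          have hρ := IH γ' hγ' hγN i hi hne'
          have hρe : Q.refl i γ' = γ' - a • Q.ev i := by rw [refl, hγi]; simp
          have hρj : Q.bil (Q.refl i γ') (Q.ev j) = -b := by
            rw [hρe, bil_sub_left, bil_smul_left, hm', hbb]; ring
          have := Good.ascend j hj _ hρ (by omega)
          rw [htarget]
          convert this using 1
          conv_rhs => rw [refl, hρj, hρe]
          simp; abel
        · subst hm1
          by_cases hγ'i : γ' = Q.ev i
          · have hb1 : b = 1 := by rw [hγ'i] at hbb; omega
            have ha1 : a = 1 := by rw [hγ'i] at hγi; omega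
            rw [htarget, hγ'i, hb1, ha1]
            convert Good.simple j hj using 1
            simp
          · have hρ := IH γ' hγ' hγN i hi hγ'i
            have hρe : Q.refl i γ' = γ' - (a + b) • Q.ev i := by rw [refl, hγi]; simp
            have hρht := ht_refl i γ'
            set ρ := Q.refl i γ' with hρdef
            have hρi : Q.bil ρ (Q.ev i) = -a - b := by
              rw [hρe, bil_sub_left, bil_smul_left, hii, hγi]; ring
            have hρj : Q.bil ρ (Q.ev j) = a := by
              rw [hρe, bil_sub_left, bil_smul_left, hm', hbb]; ring
            have hρne : ρ ≠ Q.ev j := by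
              intro h; rw [h] at hρi; omega
            have hκ := IH ρ hρ (by rw [hρht, hγi]; omega) j hj hρne
            have hκe : Q.refl j ρ = ρ - a • Q.ev j := by rw [refl, hρj]
            set κ := Q.refl j ρ
            have hκi : Q.bil κ (Q.ev i) = -b := by
              rw [hκe, bil_sub_left, bil_smul_left, hm, hρi]; ring
            have hκj : Q.bil κ (Q.ev j) = -a := by
              rw [hκe, bil_sub_left, bil_smul_left, hjj, hρj]; ring
            have h1 := Good.ascend i hi _ hκ (by omega)
            have h1e : Q.refl i κ = κ + b • Q.ev i := by rw [refl, hκi]; simp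
            have h1j : Q.bil (Q.refl i κ) (Q.ev j) = -(a + b) := by
              rw [h1e, bil_add_left, bil_smul_left, hm', hκj]; ring
            have h2 := Good.ascend j hj _ h1 (by omega)
            rw [htarget]
            convert h2 using 1
            conv_rhs => rw [refl, h1j, h1e, hκe, hρe]
            module
        · exfalso
          have hD := claimD N IH N γ' hγ' hγN hγN i j hi hj (Ne.symm hji) (by omega)
            (by rw [hγi]; nlinarith) (by rw [hγi, hbb]; nlinarith)
          have hg : Q.Good (Q.refl j γ') := Good.ascend j hj γ' hγ' hb
          set g := Q.refl j γ' with hgdef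
          have hgsupp : ∀ k, k ≠ i → k ≠ j → g k = 0 := by
            intro k hki hkj
            rw [hgdef, refl_apply_ne hkj]; exact hD k hki hkj
          have hgj : Q.bil g (Q.ev j) = b := by
            rw [hgdef, bil_refl_ev hj, hbb]; ring
          have hgi0 := (pos_of_bil_pos hg.props.1 (i := i) (by omega)).2
          have hgj0 := (pos_of_bil_pos hg.props.1 (i := j) (by omega)).2
          have hge : g = g i • Q.ev i + g j • Q.ev j := by
            funext k
            by_cases hki : k = i
            · subst hki; simp [ev, Ne.symm hji]
            · by_cases hkj : k = j
              · subst hkj; simp [ev, hji]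
              · simp [hgsupp k hki hkj, ev, hki, hkj]
          have hgg : Q.bil g g = g i * a + g j * b := by
            conv_lhs => rw [show Q.bil g g = Q.bil g (g i • Q.ev i + g j • Q.ev j) by rw [← hge]]
            rw [bil_add_right, bil_smul_right, bil_smul_right, haa, hgj]
          have hgle : Q.bil g g ≤ 2 := by
            rcases hg.props.2.2.2 with h | h <;> omega
          have ex : g i = 1 := by nlinarith
          have ey : g j = 1 := by nlinarith
          rw [hge, ex, ey] at haa
          simp only [one_smul, bil_add_left, hii, hm] at haa
          omega

lemma Good.reflect {γ : Q.I → ℤ} (h : Q.Good γ) {i : Q.I} (hi : Q.Loopfree i)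
    (hne : γ ≠ Q.ev i) : Q.Good (Q.refl i γ) :=
  good_refl_aux (Q.ht γ).toNat.succ γ h (by push_cast; omega) i hi hne

lemma refl_neg (i : Q.I) (x : Q.I → ℤ) : Q.refl i (-x) = - Q.refl i x := by
  simp only [refl, bil_neg_left]; simp; abel

lemma refl_ev_self {i : Q.I} (hi : Q.Loopfree i) : Q.refl i (Q.ev i) = - Q.ev i := by
  rw [refl, bil_ev_self_loopfree hi]; module

lemma isRoot_good {x : Q.I → ℤ} (h : Q.IsRoot x) : Q.Good x ∨ Q.Good (-x) := by
  induction h with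
  | simple i hi => exact Or.inl (Good.simple i hi)
  | fund α hα => exact Or.inl (Good.fund α hα)
  | neg_fund α hα => right; rw [neg_neg]; exact Good.fund α hα
  | reflect i hi α _ ih =>
    rcases ih with ih | ih
    · by_cases h : α = Q.ev i
      · right; rw [h, refl_ev_self hi, neg_neg]; exact Good.simple i hi
      · exact Or.inl (ih.reflect hi h)
    · by_cases h : -α = Q.ev i
      · left
        rw [show α = - Q.ev i by rw [← h, neg_neg], refl_neg, refl_ev_self hi, neg_neg]
        exact Good.simple i hi
      · right; rw [← refl_neg]; exact ih.reflect hi h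

lemma IsPosRoot.good {x : Q.I → ℤ} (h : Q.IsPosRoot x) : Q.Good x := by
  rcases isRoot_good h.1 with h1 | h1
  · exact h1
  · exfalso
    apply h.2.2
    funext i
    have h2 := h.2.1 i
    have h3 := h1.props.1 i
    simp only [Pi.neg_apply] at h3
    simp only [Pi.zero_apply]
    omega

lemma IsPosRoot.nonneg {x : Q.I → ℤ} (h : Q.IsPosRoot x) : ∀ i, 0 ≤ x i := h.2.1

lemma IsPosRoot.conn {x : Q.I → ℤ} (h : Q.IsPosRoot x) : Q.Conn x := h.good.props.2.2.1

lemma IsPosRoot.sq {x : Q.I → ℤ} (h : Q.IsPosRoot x) : Q.bil x x = 2 ∨ Q.bil x x ≤ 0 :=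
  h.good.props.2.2.2

lemma IsPosRoot.refl {x : Q.I → ℤ} (h : Q.IsPosRoot x) {i : Q.I} (hi : Q.Loopfree i)
    (hne : x ≠ Q.ev i) : Q.IsPosRoot (Q.refl i x) := (h.good.reflect hi hne).isPosRoot

lemma isPosRoot_ev {i : Q.I} (hi : Q.Loopfree i) : Q.IsPosRoot (Q.ev i) :=
  (Good.simple i hi).isPosRoot

lemma inFund_mk {x : Q.I → ℤ} (h0 : ∀ i, 0 ≤ x i) (h1 : x ≠ 0) (h2 : Q.Conn x)
    (h3 : ∀ i, Q.bil x (Q.ev i) ≤ 0) : Q.InFund x := ⟨h1, h0, (conn_iff _).2 h2, h3⟩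

lemma InFund.isPosRoot {x : Q.I → ℤ} (h : Q.InFund x) : Q.IsPosRoot x :=
  (Good.fund x h).isPosRoot

lemma InFund.conn {x : Q.I → ℤ} (h : Q.InFund x) : Q.Conn x := (conn_iff _).1 h.2.2.1

lemma IsPosRoot.pp_nonneg {x : Q.I → ℤ} (h : Q.IsPosRoot x) : 0 ≤ Q.pp x := by
  have := bil_self_even x
  rcases h.sq with h | h <;> omega

end Roots

end Part2

section Part3

section Lam

variable {Q : FinQuiver} {K : Type} [Field K] {l : Q.I → K}

lemma pair_add (l : Q.I → K) (x y : Q.I → ℤ) : Q.pair K l (x + y) = Q.pair K l x + Q.pair K l y := by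
  simp only [pair, Pi.add_apply, Int.cast_add, mul_add, Finset.sum_add_distrib]

lemma pair_smul (l : Q.I → K) (c : ℤ) (x : Q.I → ℤ) :
    Q.pair K l (c • x) = (c : K) * Q.pair K l x := by
  simp only [pair, Pi.smul_apply, smul_eq_mul, Int.cast_mul, Finset.mul_sum]
  exact Finset.sum_congr rfl fun i _ => by ring

lemma pair_neg (l : Q.I → K) (x : Q.I → ℤ) : Q.pair K l (-x) = - Q.pair K l x := by
  have := pair_smul l (-1) x
  simpa using this

lemma pair_sub (l : Q.I → K) (x y : Q.I → ℤ) : Q.pair K l (x - y) = Q.pair K l x - Q.pair K l y := by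
  rw [sub_eq_add_neg, pair_add, pair_neg]; ring

lemma pair_zero (l : Q.I → K) : Q.pair K l 0 = 0 := by simp [pair]

lemma pair_sum {ι : Type*} (l : Q.I → K) (s : Finset ι) (f : ι → Q.I → ℤ) :
    Q.pair K l (∑ j ∈ s, f j) = ∑ j ∈ s, Q.pair K l (f j) := by
  classical
  induction s using Finset.induction_on with
  | empty => simp [pair_zero]
  | insert a s ha ih => rw [Finset.sum_insert ha, Finset.sum_insert ha, pair_add, ih]

lemma pair_ev (l : Q.I → K) (i : Q.I) : Q.pair K l (Q.ev i) = l i := by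
  simp [pair, ev]

lemma pair_refl_self (l : Q.I → K) (i : Q.I) (x : Q.I → ℤ) :
    Q.pair K l (Q.refl i x) = Q.pair K l x - (Q.bil x (Q.ev i) : ℤ) * l i := by
  rw [refl, pair_sub, pair_smul, pair_ev]

lemma pair_coRefl (l : Q.I → K) (i : Q.I) (x : Q.I → ℤ) :
    Q.pair K (Q.coRefl K i l) x = Q.pair K l x - (Q.bil x (Q.ev i) : ℤ) * l i := by
  rw [bil_comm, bil_eq_right]
  simp only [pair, coRefl, sub_mul, Finset.sum_sub_distrib]
  push_cast
  rw [Finset.sum_mul]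
  congr 1
  exact Finset.sum_congr rfl fun j _ => by ring

lemma coRefl_self {i : Q.I} (hi : Q.Loopfree i) (l : Q.I → K) : Q.coRefl K i l i = - l i := by
  simp only [coRefl, bil_ev_self_loopfree hi]; push_cast; ring

lemma pair_refl {i : Q.I} (hi : Q.Loopfree i) (l : Q.I → K) (x : Q.I → ℤ) :
    Q.pair K (Q.coRefl K i l) (Q.refl i x) = Q.pair K l x := by
  rw [pair_refl_self, pair_coRefl, coRefl_self hi]; ring

lemma coRefl_coRefl {i : Q.I} (hi : Q.Loopfree i) (l : Q.I → K) :
    Q.coRefl K i (Q.coRefl K i l) = l := by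
  funext j
  have : Q.coRefl K i (Q.coRefl K i l) j = Q.coRefl K i l j
    - (Q.bil (Q.ev i) (Q.ev j) : ℤ) * Q.coRefl K i l i := rfl
  rw [this, coRefl_self hi]
  simp only [coRefl]; ring

lemma Rplus_refl {i : Q.I} (hi : Q.Loopfree i) (hl : l i ≠ 0) {x : Q.I → ℤ}
    (hx : x ∈ Q.Rplus K l) : Q.refl i x ∈ Q.Rplus K (Q.coRefl K i l) := by
  refine ⟨hx.1.refl hi ?_, ?_⟩
  · rintro rfl
    exact hl (by rw [← pair_ev l i]; exact hx.2)
  · rw [pair_refl hi]; exact hx.2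

lemma Rplus_refl' {i : Q.I} (hi : Q.Loopfree i) (hl : l i ≠ 0) {x : Q.I → ℤ}
    (hx : x ∈ Q.Rplus K (Q.coRefl K i l)) : Q.refl i x ∈ Q.Rplus K l := by
  have := Rplus_refl hi (l := Q.coRefl K i l) (by rw [coRefl_self hi]; simpa using hl) hx
  rwa [coRefl_coRefl hi] at this

lemma Sigma_refl {i : Q.I} (hi : Q.Loopfree i) (hl : l i ≠ 0) {x : Q.I → ℤ}
    (hx : x ∈ Q.SigmaSet K l) : Q.refl i x ∈ Q.SigmaSet K (Q.coRefl K i l) := by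
  refine ⟨Rplus_refl hi hl hx.1, fun n β hn hβ hsum => ?_⟩
  have := hx.2 n (fun j => Q.refl i (β j)) hn (fun j => Rplus_refl' hi hl (hβ j))
    (by rw [← refl_sum, ← hsum, refl_refl hi])
  simpa only [pp_refl hi] using this

lemma NRplus_refl {i : Q.I} (hi : Q.Loopfree i) (hl : l i ≠ 0) {x : Q.I → ℤ}
    (hx : x ∈ Q.NRplus K l) : Q.refl i x ∈ Q.NRplus K (Q.coRefl K i l) := by
  unfold NRplus at *
  induction hx using AddSubmonoid.closure_induction with
  | mem x hx => exact AddSubmonoid.subset_closure (Rplus_refl hi hl hx)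
  | zero => rw [refl_zero]; exact AddSubmonoid.zero_mem _
  | add x y _ _ h1 h2 => rw [refl_add]; exact AddSubmonoid.add_mem _ h1 h2

lemma NRplus_sum {ι : Type*} {J : Finset ι} {β : ι → Q.I → ℤ}
    (h : ∀ j ∈ J, β j ∈ Q.Rplus K l) : ∑ j ∈ J, β j ∈ Q.NRplus K l :=
  AddSubmonoid.sum_mem _ fun j hj => AddSubmonoid.subset_closure (h j hj)

lemma NRplus_props {x : Q.I → ℤ} (hx : x ∈ Q.NRplus K l) :
    (∀ i, 0 ≤ x i) ∧ Q.pair K l x = 0 := by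
  unfold NRplus at *
  induction hx using AddSubmonoid.closure_induction with
  | mem x hx => exact ⟨hx.1.nonneg, hx.2⟩
  | zero => exact ⟨fun _ => le_rfl, pair_zero l⟩
  | add x y _ _ h1 h2 =>
    exact ⟨fun i => add_nonneg (h1.1 i) (h2.1 i), by rw [pair_add, h1.2, h2.2, add_zero]⟩

lemma Sigma_lt_sum {ι : Type*} {x : Q.I → ℤ} (hx : x ∈ Q.SigmaSet K l) (J : Finset ι)
    (β : ι → Q.I → ℤ) (hJ : 2 ≤ J.card) (hβ : ∀ j ∈ J, β j ∈ Q.Rplus K l)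
    (hs : x = ∑ j ∈ J, β j) : ∑ j ∈ J, Q.pp (β j) < Q.pp x := by
  have := hx.2 J.card (fun k => β (J.equivFin.symm k)) hJ (fun j => hβ _ (J.equivFin.symm j).2)
    (by
      rw [hs, Equiv.sum_comp J.equivFin.symm (fun k : J => β k), Finset.sum_coe_sort J β])
  rwa [Equiv.sum_comp J.equivFin.symm (fun k : J => Q.pp (β k)),
    Finset.sum_coe_sort J (fun k => Q.pp (β k))] at this

lemma Sigma_lt_two {x y z : Q.I → ℤ} (hx : x ∈ Q.SigmaSet K l) (hy : y ∈ Q.Rplus K l)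
    (hz : z ∈ Q.Rplus K l) (hs : x = y + z) : Q.pp y + Q.pp z < Q.pp x := by
  have := hx.2 2 ![y, z] le_rfl (by intro j; fin_cases j <;> simpa) (by simpa using hs)
  simpa using this

lemma pp_ev {i : Q.I} (hi : Q.Loopfree i) : Q.pp (Q.ev i) = 0 := by
  have := bil_self_even (Q.ev i)
  rw [bil_ev_self_loopfree hi] at this
  omega

lemma Rplus_ev {i : Q.I} (hi : Q.Loopfree i) (hl : l i = 0) : Q.ev i ∈ Q.Rplus K l :=
  ⟨isPosRoot_ev hi, by rw [pair_ev, hl]⟩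

lemma Rplus_ht_pos {x : Q.I → ℤ} (hx : x ∈ Q.Rplus K l) : 0 < Q.ht x := ht_pos hx.1.nonneg hx.1.2.2

lemma ht_sum {ι : Type*} (s : Finset ι) (f : ι → Q.I → ℤ) :
    Q.ht (∑ j ∈ s, f j) = ∑ j ∈ s, Q.ht (f j) := by
  classical
  induction s using Finset.induction_on with
  | empty => simp [ht]
  | insert a s ha ih => rw [Finset.sum_insert ha, Finset.sum_insert ha, ht_add, ih]

lemma Sigma_ev {i : Q.I} (hi : Q.Loopfree i) (hl : l i = 0) : Q.ev i ∈ Q.SigmaSet K l := by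
  refine ⟨Rplus_ev hi hl, fun n β hn hβ hs => ?_⟩
  exfalso
  have h1 : Q.ht (Q.ev i) = ∑ j, Q.ht (β j) := by rw [hs, ht_sum]
  have h2 : ∑ j : Fin n, (1 : ℤ) ≤ ∑ j, Q.ht (β j) :=
    Finset.sum_le_sum fun j _ => Rplus_ht_pos (hβ j)
  rw [ht_ev] at h1
  simp at h2
  omega

lemma Sigma_bil_ev {x : Q.I → ℤ} (hx : x ∈ Q.SigmaSet K l) {i : Q.I} (hi : Q.Loopfree i)
    (hl : l i = 0) (hne : x ≠ Q.ev i) : Q.bil x (Q.ev i) ≤ 0 := by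
  by_contra hc
  push Not at hc
  obtain ⟨k, hk⟩ : ∃ k : ℕ, Q.bil x (Q.ev i) = k := ⟨(Q.bil x (Q.ev i)).toNat, by omega⟩
  have h1 : Q.refl i x ∈ Q.Rplus K l :=
    ⟨hx.1.1.refl hi hne, by rw [pair_refl_self, hl, hx.1.2]; simp⟩
  have := hx.2 (k + 1) (Fin.cons (Q.refl i x) (fun _ => Q.ev i)) (by omega)
    (by
      intro j
      refine Fin.cases ?_ (fun j => ?_) j
      · simpa using h1
      · simpa using Rplus_ev hi hl)
    (by
      rw [Fin.sum_univ_succ]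
      simp [refl, hk])
  rw [Fin.sum_univ_succ] at this
  simp [pp_ev hi, pp_refl hi] at this

/-- distinct elements of `Σ` pair nonpositively -/
lemma Sigma_bil_nonpos_aux : ∀ N : ℕ, ∀ (l : Q.I → K) (x y : Q.I → ℤ), x ∈ Q.SigmaSet K l →
    y ∈ Q.SigmaSet K l → x ≠ y → Q.ht x < N → Q.bil x y ≤ 0 := by
  intro N
  induction N with
  | zero => intro l x y hx _ _ h; have := Rplus_ht_pos hx.1; norm_cast at h; omega
  | succ N ih =>
    intro l x y hx hy hne hN
    by_cases h : ∀ i, Q.bil x (Q.ev i) ≤ 0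
    · exact bil_nonpos_of_nonneg hy.1.1.nonneg fun i _ => h i
    · push Not at h
      obtain ⟨i, hi0⟩ := h
      obtain ⟨hi, hxi⟩ := pos_of_bil_pos hx.1.1.nonneg hi0
      by_cases hl : l i = 0
      · by_cases hxe : x = Q.ev i
        · rw [hxe, bil_comm]
          exact Sigma_bil_ev hy hi hl (fun h => hne (by rw [hxe, h]))
        · exact absurd (Sigma_bil_ev hx hi hl hxe) (by omega)
      · have := ih _ _ _ (Sigma_refl hi hl hx) (Sigma_refl hi hl hy)
          (fun h => hne (by rw [← refl_refl hi x, h, refl_refl hi]))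
          (by rw [ht_refl]; push_cast at hN; omega)
        rwa [bil_refl hi] at this

lemma Sigma_bil_nonpos {x y : Q.I → ℤ} (hx : x ∈ Q.SigmaSet K l)
    (hy : y ∈ Q.SigmaSet K l) (hne : x ≠ y) : Q.bil x y ≤ 0 :=
  Sigma_bil_nonpos_aux ((Q.ht x).toNat + 1) l x y hx hy hne (by push_cast; omega)

lemma exists_decomp_aux : ∀ N : ℕ, ∀ x : Q.I → ℤ, x ∈ Q.Rplus K l → Q.ht x < N →
    ∃ M : Multiset (Q.I → ℤ), (∀ y ∈ M, y ∈ Q.SigmaSet K l) ∧ M.sum = x ∧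
      Q.pp x ≤ (M.map Q.pp).sum := by
  intro N
  induction N with
  | zero => intro x hx h; have := Rplus_ht_pos hx; norm_cast at h; omega
  | succ N ih =>
    intro x hx hN
    by_cases hS : x ∈ Q.SigmaSet K l
    · exact ⟨{x}, by simpa using hS, by simp, by simp⟩
    · have : ¬ ∀ (n : ℕ) (β : Fin n → (Q.I → ℤ)), 2 ≤ n → (∀ j, β j ∈ Q.Rplus K l) →
          x = ∑ j, β j → (∑ j, Q.pp (β j)) < Q.pp x := fun h => hS ⟨hx, h⟩
      push Not at this
      obtain ⟨n, β, hn, hβ, hs, hp⟩ := this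
      have hlt : ∀ j, Q.ht (β j) < N := by
        intro j
        have h1 : Q.ht x = ∑ j, Q.ht (β j) := by rw [hs, ht_sum]
        rw [← Finset.add_sum_erase _ _ (Finset.mem_univ j)] at h1
        have h2 : ∑ k ∈ Finset.univ.erase j, (1 : ℤ) ≤ ∑ k ∈ Finset.univ.erase j, Q.ht (β k) :=
          Finset.sum_le_sum fun j _ => Rplus_ht_pos (hβ j)
        rw [Finset.sum_const, Finset.card_erase_of_mem (Finset.mem_univ j), Finset.card_univ,
          Fintype.card_fin, nsmul_eq_mul, mul_one] at h2
        push_cast at hN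
        omega
      choose M hM1 hM2 hM3 using fun j => ih (β j) (hβ j) (hlt j)
      refine ⟨∑ j, M j, ?_, ?_, ?_⟩
      · intro y hy
        obtain ⟨j, -, hj⟩ := Multiset.mem_sum.1 hy
        exact hM1 j y hj
      · rw [Multiset.sum_sum, hs]
        exact Finset.sum_congr rfl fun j _ => hM2 j
      · rw [← Multiset.coe_mapAddMonoidHom, map_sum, Multiset.sum_sum]
        exact hp.trans (Finset.sum_le_sum fun j _ => hM3 j)

lemma exists_decomp {x : Q.I → ℤ} (hx : x ∈ Q.Rplus K l) :
    ∃ M : Multiset (Q.I → ℤ), (∀ y ∈ M, y ∈ Q.SigmaSet K l) ∧ M.sum = x ∧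
      Q.pp x ≤ (M.map Q.pp).sum :=
  exists_decomp_aux ((Q.ht x).toNat + 1) x hx (by push_cast; omega)

lemma exists_decomp_N {x : Q.I → ℤ} (hx : x ∈ Q.NRplus K l) :
    ∃ M : Multiset (Q.I → ℤ), (∀ y ∈ M, y ∈ Q.SigmaSet K l) ∧ M.sum = x := by
  unfold NRplus at *
  induction hx using AddSubmonoid.closure_induction with
  | mem x hx => obtain ⟨M, h1, h2, -⟩ := exists_decomp hx; exact ⟨M, h1, h2⟩
  | zero => exact ⟨0, by simp, by simp⟩
  | add x y _ _ h1 h2 =>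
    obtain ⟨M1, a1, b1⟩ := h1
    obtain ⟨M2, a2, b2⟩ := h2
    refine ⟨M1 + M2, ?_, by rw [Multiset.sum_add, b1, b2]⟩
    intro y hy
    rcases Multiset.mem_add.1 hy with h | h
    · exact a1 y h
    · exact a2 y h

lemma family_of_multiset (M : Multiset (Q.I → ℤ)) : ∃ (n : ℕ) (β : Fin n → Q.I → ℤ),
    (∀ j, β j ∈ M) ∧ ∑ j, β j = M.sum ∧ ∑ j, Q.pp (β j) = (M.map Q.pp).sum := by
  induction M using Quotient.inductionOn with
  | h L =>
    refine ⟨L.length, fun j => L[j], ?_, ?_, ?_⟩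
    · intro j; simp
    · simp [Fin.sum_univ_getElem]
    · simp [Fin.sum_univ_fun_getElem]

lemma exists_family_N {x : Q.I → ℤ} (hx : x ∈ Q.NRplus K l) :
    ∃ (n : ℕ) (β : Fin n → Q.I → ℤ), (∀ j, β j ∈ Q.SigmaSet K l) ∧ ∑ j, β j = x := by
  obtain ⟨M, h1, h2⟩ := exists_decomp_N hx
  obtain ⟨n, β, h3, h4, -⟩ := family_of_multiset M
  exact ⟨n, β, fun j => h1 _ (h3 j), by rw [h4, h2]⟩

lemma exists_family {x : Q.I → ℤ} (hx : x ∈ Q.Rplus K l) :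
    ∃ (n : ℕ) (β : Fin n → Q.I → ℤ), (∀ j, β j ∈ Q.SigmaSet K l) ∧ ∑ j, β j = x ∧
      Q.pp x ≤ ∑ j, Q.pp (β j) := by
  obtain ⟨M, h1, h2, h5⟩ := exists_decomp hx
  obtain ⟨n, β, h3, h4, h6⟩ := family_of_multiset M
  exact ⟨n, β, fun j => h1 _ (h3 j), by rw [h4, h2], by rw [h6]; exact h5⟩

/-- the key property: some `τ ∈ Σ` is a subsum of every decomposition -/
def Key (l : Q.I → K) (α : Q.I → ℤ) : Prop :=
  ∃ τ ∈ Q.SigmaSet K l, ∀ (ι : Type) (J : Finset ι) (β : ι → Q.I → ℤ),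
    (∀ j ∈ J, β j ∈ Q.SigmaSet K l) → ∑ j ∈ J, β j = α → ∃ C ⊆ J, ∑ j ∈ C, β j = τ

lemma Key_refl {i : Q.I} (hi : Q.Loopfree i) (hl : l i ≠ 0) {α : Q.I → ℤ}
    (h : Key (Q.coRefl K i l) (Q.refl i α)) : Key l α := by
  obtain ⟨τ, hτ, h⟩ := h
  refine ⟨Q.refl i τ, ?_, fun ι J β hβ hs => ?_⟩
  · have := Sigma_refl hi (l := Q.coRefl K i l) (by rw [coRefl_self hi]; simpa using hl) hτ
    rwa [coRefl_coRefl hi] at this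
  · obtain ⟨C, hC, hC2⟩ := h ι J (fun j => Q.refl i (β j)) (fun j hj => Sigma_refl hi hl (hβ j hj))
      (by rw [← refl_sum, hs])
    exact ⟨C, hC, by rw [← hC2, ← refl_sum, refl_refl hi]⟩

lemma Key_of_pos {i : Q.I} (hi : Q.Loopfree i) (hl : l i = 0) {α : Q.I → ℤ}
    (h : 0 < Q.bil α (Q.ev i)) : Key l α := by
  refine ⟨Q.ev i, Sigma_ev hi hl, fun ι J β hβ hs => ?_⟩
  have h1 : ∃ j ∈ J, 0 < Q.bil (β j) (Q.ev i) := by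
    by_contra hc
    push Not at hc
    rw [← hs, bil_sum_left] at h
    exact absurd (Finset.sum_nonpos hc) (by omega)
  obtain ⟨j, hj, hj2⟩ := h1
  refine ⟨{j}, by simpa using hj, ?_⟩
  rw [Finset.sum_singleton]
  by_contra hne
  exact absurd (Sigma_bil_ev (hβ j hj) hi hl hne) (by omega)

lemma main_of_Key (hK : ∀ α ∈ Q.NRplus K l, α ≠ 0 → Key l α) : ∀ N : ℕ, ∀ α ∈ Q.NRplus K l,
    Q.ht α < N → ∃ (r : ℕ) (σ : ℕ → Q.I → ℤ), (∀ t < r, σ t ∈ Q.SigmaSet K l) ∧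
      α = ∑ t ∈ Finset.range r, σ t ∧
      ∀ (ι : Type) (J : Finset ι) (β : ι → Q.I → ℤ), (∀ j ∈ J, β j ∈ Q.SigmaSet K l) →
        ∑ j ∈ J, β j = α → ∃ P : ι → ℕ, (∀ j ∈ J, P j < r) ∧
          ∀ t < r, σ t = ∑ j ∈ J.filter (fun j => P j = t), β j := by
  classical
  intro N
  induction N with
  | zero => intro x hx h; have := ht_nonneg (NRplus_props hx).1; norm_cast at h; omega
  | succ N ih =>
    intro α hα hN
    by_cases h0 : α = 0
    · refine ⟨0, fun _ => 0, by simp, by simpa using h0, fun ι J β hβ hs => ⟨fun _ => 0, ?_, by simp⟩⟩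
      intro j hj
      exfalso
      have h1 : Q.ht (∑ j ∈ J, β j) = 0 := by rw [hs, h0]; simp [ht]
      rw [ht_sum] at h1
      have := (Finset.sum_eq_zero_iff_of_nonneg
        (fun j hj => (Rplus_ht_pos (hβ j hj).1).le)).1 h1 j hj
      exact absurd (Rplus_ht_pos (hβ j hj).1) (by omega)
    · obtain ⟨τ, hτ, hkey⟩ := hK α hα h0
      have hsub : α - τ ∈ Q.NRplus K l := by
        obtain ⟨n, β, h1, h2⟩ := exists_family_N hα
        obtain ⟨C, hC, hC2⟩ := hkey _ Finset.univ β (fun j _ => h1 j) h2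
        rw [← h2, ← hC2, ← Finset.sum_sdiff hC]
        rw [add_sub_cancel_right]
        exact NRplus_sum fun j _ => (h1 j).1
      have hτp := Rplus_ht_pos hτ.1
      obtain ⟨r, σ, hσ, hsum, hP⟩ := ih (α - τ) hsub (by rw [ht_sub]; push_cast at hN; omega)
      refine ⟨r + 1, fun t => Nat.casesOn t τ σ, ?_, ?_, ?_⟩
      · intro t ht
        cases t with
        | zero => exact hτ
        | succ t => exact hσ t (by omega)
      · rw [Finset.sum_range_succ']
        change α = ∑ t ∈ Finset.range r, σ t + τ
        rw [← hsum]; abel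
      · intro ι J β hβ hs
        obtain ⟨C, hC, hC2⟩ := hkey ι J β hβ hs
        obtain ⟨P, hP1, hP2⟩ := hP ι (J \ C) β (fun j hj => hβ j (Finset.mem_sdiff.1 hj).1)
          (by rw [← hs, ← hC2, ← Finset.sum_sdiff hC]; abel)
        refine ⟨fun j => if j ∈ C then 0 else P j + 1, ?_, ?_⟩
        · intro j hj
          by_cases hjC : j ∈ C
          · simp [hjC]
          · simp [hjC, hP1 j (Finset.mem_sdiff.2 ⟨hj, hjC⟩)]
        · intro t ht
          cases t with
          | zero =>
            simp only
            rw [← hC2]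
            refine Finset.sum_congr ?_ fun _ _ => rfl
            ext j
            simp only [Finset.mem_filter]
            constructor
            · intro h; exact ⟨hC h, by simp [h]⟩
            · rintro ⟨-, h⟩; by_contra hc; simp [hc] at h
          | succ t =>
            simp only
            rw [hP2 t (by omega)]
            refine Finset.sum_congr ?_ fun _ _ => rfl
            ext j
            simp only [Finset.mem_filter, Finset.mem_sdiff]
            by_cases hjC : j ∈ C <;> simp [hjC]

theorem stmt_of_Key (hK : ∀ α ∈ Q.NRplus K l, α ≠ 0 → Key l α) (α : Q.I → ℤ)
    (hα : α ∈ Q.NRplus K l) :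
    ∃ (r : ℕ) (σ : Fin r → (Q.I → ℤ)),
      (∀ t, σ t ∈ Q.SigmaSet K l) ∧ α = ∑ t, σ t ∧
      ∀ (n : ℕ) (β : Fin n → (Q.I → ℤ)), (∀ j, β j ∈ Q.SigmaSet K l) →
        α = ∑ j, β j →
        ∃ P : Fin n → Fin r,
          ∀ t, σ t = ∑ j ∈ Finset.univ.filter (fun j => P j = t), β j := by
  obtain ⟨r, σ, h1, h2, h3⟩ := main_of_Key hK ((Q.ht α).toNat + 1) α hα (by push_cast; omega)
  refine ⟨r, fun t => σ t, fun t => h1 t t.2, by rw [h2, Finset.sum_range], ?_⟩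
  intro n β hβ hs
  obtain ⟨P, hP1, hP2⟩ := h3 (Fin n) Finset.univ β (fun j _ => hβ j) hs.symm
  refine ⟨fun j => ⟨P j, hP1 j (Finset.mem_univ j)⟩, fun t => ?_⟩
  change σ t = _
  rw [hP2 t t.2]
  refine Finset.sum_congr ?_ fun _ _ => rfl
  ext j
  simp [Fin.ext_iff]

end Lam

end Part3

section Part4

section Ground

variable {Q : FinQuiver}

lemma ground_aux {ι : Type*} [Fintype ι] (C : ι → ι → ℚ) (hC : ∀ i j, C i j = C j i)
    (a f g : ι → ℚ) :
    2 * ∑ i, ∑ j, (f i * a i) * (g j * a j) * C i j =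
      2 * ∑ i, f i * g i * a i * (∑ j, a j * C j i)
        - ∑ i, ∑ j, a i * a j * C i j * ((f i - f j) * (g i - g j)) := by
  have A : ∑ i, ∑ j, a i * a j * C i j * (f i * g i) =
      ∑ i, f i * g i * a i * (∑ j, a j * C j i) := by
    refine Finset.sum_congr rfl fun i _ => ?_
    rw [Finset.mul_sum]
    refine Finset.sum_congr rfl fun j _ => ?_
    rw [hC i j]; ring
  have B : ∑ i, ∑ j, a i * a j * C i j * (f j * g j) =
      ∑ i, f i * g i * a i * (∑ j, a j * C j i) := by
    rw [← A, Finset.sum_comm]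
    refine Finset.sum_congr rfl fun i _ => Finset.sum_congr rfl fun j _ => ?_
    rw [hC i j]; ring
  have D : ∑ i, ∑ j, a i * a j * C i j * (f i * g j) =
      ∑ i, ∑ j, (f i * a i) * (g j * a j) * C i j :=
    Finset.sum_congr rfl fun i _ => Finset.sum_congr rfl fun j _ => by ring
  have E : ∑ i, ∑ j, a i * a j * C i j * (f j * g i) =
      ∑ i, ∑ j, (f i * a i) * (g j * a j) * C i j := by
    rw [← D, Finset.sum_comm]
    refine Finset.sum_congr rfl fun i _ => Finset.sum_congr rfl fun j _ => ?_
    rw [hC i j]; ring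
  have F : ∑ i, ∑ j, a i * a j * C i j * ((f i - f j) * (g i - g j)) =
      ∑ i, ∑ j, a i * a j * C i j * (f i * g i) + ∑ i, ∑ j, a i * a j * C i j * (f j * g j)
      - ∑ i, ∑ j, a i * a j * C i j * (f i * g j) - ∑ i, ∑ j, a i * a j * C i j * (f j * g i) := by
    simp only [← Finset.sum_add_distrib, ← Finset.sum_sub_distrib]
    exact Finset.sum_congr rfl fun i _ => Finset.sum_congr rfl fun j _ => by ring
  rw [F, A, B, D, E]; ring

/-- rational Cartan entries -/
def Cq (Q : FinQuiver) (i j : Q.I) : ℚ := (Q.bil (Q.ev i) (Q.ev j) : ℚ)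

lemma Cq_comm (i j : Q.I) : Q.Cq i j = Q.Cq j i := by simp [Cq, bil_comm]

lemma cast_bil_ev (x : Q.I → ℤ) (i : Q.I) :
    ((Q.bil x (Q.ev i) : ℤ) : ℚ) = ∑ j, (x j : ℚ) * Q.Cq j i := by
  rw [bil_eq_left]; push_cast; rfl

lemma cast_bil (x y : Q.I → ℤ) :
    ((Q.bil x y : ℤ) : ℚ) = ∑ i, ∑ j, (x i : ℚ) * (y j : ℚ) * Q.Cq i j := by
  rw [bil_eq_left]; push_cast
  refine Finset.sum_congr rfl fun i _ => ?_
  rw [bil_comm, cast_bil_ev, Finset.mul_sum]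
  refine Finset.sum_congr rfl fun j _ => ?_
  rw [Cq_comm]; ring

/-- Dirichlet energy -/
def En (Q : FinQuiver) (α : Q.I → ℤ) (f : Q.I → ℚ) : ℚ :=
  ∑ i, ∑ j, (α i : ℚ) * (α j : ℚ) * Q.Cq i j * ((f i - f j) * (f i - f j))

lemma En_term {α : Q.I → ℤ} (hα : ∀ i, 0 ≤ α i) (f : Q.I → ℚ) (i j : Q.I) :
    (α i : ℚ) * (α j : ℚ) * Q.Cq i j * ((f i - f j) * (f i - f j)) ≤ 0 := by
  by_cases hij : i = j
  · subst hij; simp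
  · have h1 : Q.Cq i j ≤ 0 := by
      unfold Cq; exact_mod_cast bil_ev_le hij
    have h2 : (0 : ℚ) ≤ (α i : ℚ) * (α j : ℚ) := by
      exact_mod_cast mul_nonneg (hα i) (hα j)
    exact mul_nonpos_of_nonpos_of_nonneg (mul_nonpos_of_nonneg_of_nonpos h2 h1) (mul_self_nonneg _)

lemma En_nonpos {α : Q.I → ℤ} (hα : ∀ i, 0 ≤ α i) (f : Q.I → ℚ) : Q.En α f ≤ 0 :=
  Finset.sum_nonpos fun i _ => Finset.sum_nonpos fun j _ => En_term hα f i j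

lemma En_const {α : Q.I → ℤ} (hα : ∀ i, 0 ≤ α i) (hc : Q.Conn α) (f : Q.I → ℚ)
    (h : 0 ≤ Q.En α f) : ∃ c : ℚ, ∀ i, α i ≠ 0 → f i = c := by
  have h0 : Q.En α f = 0 := le_antisymm (En_nonpos hα f) h
  have h1 : ∀ i j, (α i : ℚ) * (α j : ℚ) * Q.Cq i j * ((f i - f j) * (f i - f j)) = 0 := by
    intro i j
    have h2 := (Finset.sum_eq_zero_iff_of_nonpos
      (fun i _ => Finset.sum_nonpos fun j _ => En_term hα f i j)).1 h0 i (Finset.mem_univ i)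
    exact (Finset.sum_eq_zero_iff_of_nonpos (fun j _ => En_term hα f i j)).1 h2 j
      (Finset.mem_univ j)
  by_cases hz : ∃ i, α i ≠ 0
  · obtain ⟨i0, hi0⟩ := hz
    refine ⟨f i0, fun j hj => ?_⟩
    rcases hc {i | f i = f i0} (by
      intro i hi k hk hxi hxk
      have h3 := h1 i k
      have h4 : f i - f k ≠ 0 := by
        intro h5
        apply hk
        have h6 : f i = f i0 := hi
        change f k = f i0
        linarith
      have h7 : (α i : ℚ) ≠ 0 := by exact_mod_cast hxi
      have h8 : (α k : ℚ) ≠ 0 := by exact_mod_cast hxk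
      simp only [mul_eq_zero, h7, h8, h4, or_self, or_false, false_or] at h3
      unfold Cq at h3
      exact_mod_cast h3) with h2 | h2
    · exact absurd (h2 i0 rfl) hi0
    · by_contra hne
      exact hj (h2 j hne)
  · push Not at hz
    exact ⟨0, fun i hi => absurd (hz i) hi⟩

lemma ground (τ x y : Q.I → ℤ) (f g : Q.I → ℚ) (hf : ∀ i, f i * τ i = x i)
    (hg : ∀ i, g i * τ i = y i) :
    2 * ((Q.bil x y : ℤ) : ℚ) = 2 * ∑ i, f i * g i * τ i * ((Q.bil τ (Q.ev i) : ℤ) : ℚ)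
      - ∑ i, ∑ j, (τ i : ℚ) * (τ j : ℚ) * Q.Cq i j * ((f i - f j) * (g i - g j)) := by
  have := ground_aux Q.Cq Cq_comm (fun i => (τ i : ℚ)) f g
  simp only [hf, hg] at this
  rw [cast_bil, this]
  simp only [cast_bil_ev]

lemma div_mul_supp {τ x : Q.I → ℤ} (h : ∀ i, x i ≠ 0 → τ i ≠ 0) (i : Q.I) :
    ((x i : ℚ) / τ i) * τ i = x i := by
  by_cases h0 : τ i = 0
  · have : x i = 0 := by by_contra hc; exact h i hc h0
    simp [h0, this]
  · have : (τ i : ℚ) ≠ 0 := by exact_mod_cast h0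
    field_simp

lemma G1 {α a b : Q.I → ℤ} (hα : Q.InFund α) (hab : a + b = α) (ha : ∀ i, 0 ≤ a i)
    (hb : ∀ i, 0 ≤ b i) (ha0 : a ≠ 0) (hb0 : b ≠ 0) (h : 0 ≤ Q.bil a b) : Q.bil a a = 0 := by
  have hsum : ∀ i, a i + b i = α i := fun i => congrFun hab i
  have hα0 := hα.2.1
  have hsa : ∀ i, a i ≠ 0 → α i ≠ 0 := fun i hi h => hi (by
    have := hsum i; have := ha i; have := hb i; omega)
  have hsb : ∀ i, b i ≠ 0 → α i ≠ 0 := fun i hi h => hi (by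
    have := hsum i; have := ha i; have := hb i; omega)
  set f : Q.I → ℚ := fun i => (a i : ℚ) / α i with hf
  set g : Q.I → ℚ := fun i => (b i : ℚ) / α i with hg
  have hfg : ∀ i, α i ≠ 0 → g i = 1 - f i := by
    intro i hi
    have h1 : (α i : ℚ) ≠ 0 := by exact_mod_cast hi
    have h2 : (a i : ℚ) + b i = α i := by exact_mod_cast hsum i
    simp only [hf, hg]
    field_simp
    linarith
  have hf0 : ∀ i, 0 ≤ f i := fun i => div_nonneg (by exact_mod_cast ha i) (by exact_mod_cast hα0 i)
  have hg0 : ∀ i, 0 ≤ g i := fun i => div_nonneg (by exact_mod_cast hb i) (by exact_mod_cast hα0 i)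
  have hgr := ground α a b f g (div_mul_supp hsa) (div_mul_supp hsb)
  have hE : ∑ i, ∑ j, (α i : ℚ) * (α j : ℚ) * Q.Cq i j * ((f i - f j) * (g i - g j)) = - Q.En α f := by
    rw [En, ← Finset.sum_neg_distrib]
    refine Finset.sum_congr rfl fun i _ => ?_
    rw [← Finset.sum_neg_distrib]
    refine Finset.sum_congr rfl fun j _ => ?_
    by_cases hi : α i = 0
    · simp [hi]
    by_cases hj : α j = 0
    · simp [hj]
    rw [hfg i hi, hfg j hj]; ring
  have hterm : ∀ i, f i * g i * α i * ((Q.bil α (Q.ev i) : ℤ) : ℚ) ≤ 0 := by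
    intro i
    refine mul_nonpos_of_nonneg_of_nonpos ?_ (by exact_mod_cast hα.2.2.2 i)
    exact mul_nonneg (mul_nonneg (hf0 i) (hg0 i)) (by exact_mod_cast hα0 i)
  have hX : ∑ i, f i * g i * α i * ((Q.bil α (Q.ev i) : ℤ) : ℚ) ≤ 0 :=
    Finset.sum_nonpos fun i _ => hterm i
  have hEn := En_nonpos hα0 f
  have hq : (0 : ℚ) ≤ ((Q.bil a b : ℤ) : ℚ) := by exact_mod_cast h
  rw [hE] at hgr
  obtain ⟨c, hc⟩ := En_const hα0 hα.conn f (by linarith)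
  have hX0 : ∑ i, f i * g i * α i * ((Q.bil α (Q.ev i) : ℤ) : ℚ) = 0 := by linarith
  have hz := (Finset.sum_eq_zero_iff_of_nonpos (fun i _ => hterm i)).1 hX0
  have hc0 : c ≠ 0 := by
    intro h0
    apply ha0
    funext i
    by_contra hi
    have h1 := hc i (hsa i hi)
    have h2 := div_mul_supp hsa i
    change f i * _ = _ at h2
    rw [h1, h0, zero_mul] at h2
    exact hi (by exact_mod_cast h2.symm)
  have hc1 : c ≠ 1 := by
    intro h0
    apply hb0
    funext i
    by_contra hi
    have h1 := hc i (hsb i hi)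
    have h2 := div_mul_supp hsb i
    change g i * _ = _ at h2
    rw [hfg i (hsb i hi), h1, h0, sub_self, zero_mul] at h2
    exact hi (by exact_mod_cast h2.symm)
  have haff : ∀ i, α i ≠ 0 → Q.bil α (Q.ev i) = 0 := by
    intro i hi
    have h1 := hz i (Finset.mem_univ i)
    rw [hfg i hi, hc i hi] at h1
    have h2 : (α i : ℚ) ≠ 0 := by exact_mod_cast hi
    have h3 : 1 - c ≠ 0 := fun h => hc1 (by linarith)
    simp only [mul_eq_zero, hc0, h2, h3, false_or] at h1
    exact_mod_cast h1
  have hgr2 := ground α a a f f (div_mul_supp hsa) (div_mul_supp hsa)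
  have h1 : ∑ i, f i * f i * α i * ((Q.bil α (Q.ev i) : ℤ) : ℚ) = 0 := by
    refine Finset.sum_eq_zero fun i _ => ?_
    by_cases hi : α i = 0
    · simp [hi]
    · rw [haff i hi]; simp
  have h2 : ∑ i, ∑ j, (α i : ℚ) * (α j : ℚ) * Q.Cq i j * ((f i - f j) * (f i - f j)) = 0 := by
    refine Finset.sum_eq_zero fun i _ => Finset.sum_eq_zero fun j _ => ?_
    by_cases hi : α i = 0
    · simp [hi]
    by_cases hj : α j = 0
    · simp [hj]
    rw [hc i hi, hc j hj]; ring
  rw [h1, h2] at hgr2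
  have : ((Q.bil a a : ℤ) : ℚ) = 0 := by linarith
  exact_mod_cast this

/-- lower bound for the norm -/
lemma G2_lower {τ x : Q.I → ℤ} (hτ : ∀ i, 0 ≤ τ i) (hs : ∀ i, x i ≠ 0 → τ i ≠ 0) :
    ∑ i, ((x i : ℚ) / τ i) * ((x i : ℚ) / τ i) * τ i * ((Q.bil τ (Q.ev i) : ℤ) : ℚ)
      ≤ ((Q.bil x x : ℤ) : ℚ) := by
  have hgr := ground τ x x _ _ (div_mul_supp hs) (div_mul_supp hs)
  have := En_nonpos hτ (fun i => (x i : ℚ) / τ i)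
  unfold En at this
  linarith

/-- support contained in the null part of `τ` -/
def InU (Q : FinQuiver) (τ x : Q.I → ℤ) : Prop :=
  ∀ i, x i ≠ 0 → τ i ≠ 0 ∧ Q.bil τ (Q.ev i) = 0

lemma InU.bil {τ x : Q.I → ℤ} (h : Q.InU τ x) : Q.bil τ x = 0 := by
  rw [bil_eq_right]
  refine Finset.sum_eq_zero fun i _ => ?_
  by_cases hi : x i = 0
  · simp [hi]
  · rw [(h i hi).2]; simp

lemma InU_sum_zero {τ x : Q.I → ℤ} (h : Q.InU τ x) :
    ∑ i, ((x i : ℚ) / τ i) * ((x i : ℚ) / τ i) * τ i * ((Q.bil τ (Q.ev i) : ℤ) : ℚ) = 0 := by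
  refine Finset.sum_eq_zero fun i _ => ?_
  by_cases hi : x i = 0
  · simp [hi]
  · rw [(h i hi).2]; simp

lemma InU.sq_nonneg {τ x : Q.I → ℤ} (hτ : ∀ i, 0 ≤ τ i) (h : Q.InU τ x) : 0 ≤ Q.bil x x := by
  have h1 := G2_lower hτ (fun i hi => (h i hi).1)
  rw [InU_sum_zero h] at h1
  exact_mod_cast h1

lemma InU.prop {τ x : Q.I → ℤ} (hτ : Q.InFund τ) (h : Q.InU τ x) (h0 : Q.bil x x ≤ 0) :
    ∃ c : ℚ, ∀ i, (x i : ℚ) = c * τ i := by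
  have hs : ∀ i, x i ≠ 0 → τ i ≠ 0 := fun i hi => (h i hi).1
  have hgr := ground τ x x _ _ (div_mul_supp hs) (div_mul_supp hs)
  rw [InU_sum_zero h] at hgr
  have h0' : ((Q.bil x x : ℤ) : ℚ) ≤ 0 := by exact_mod_cast h0
  obtain ⟨c, hc⟩ := En_const hτ.2.1 hτ.conn (fun i => (x i : ℚ) / τ i)
    (by unfold En; linarith)
  refine ⟨c, fun i => ?_⟩
  by_cases hi : τ i = 0
  · have : x i = 0 := by by_contra hc; exact hs i hc hi
    simp [hi, this]
  · rw [← hc i hi]; exact (div_mul_supp hs i).symm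

end Ground

section Null

variable {Q : FinQuiver} {K : Type} [Field K] [CharZero K] {l : Q.I → K}

lemma rat_mul_bil {τ y : Q.I → ℤ} {s : ℚ} (h : ∀ i, (y i : ℚ) = s * τ i) (z : Q.I → ℤ) :
    ((Q.bil y z : ℤ) : ℚ) = s * (Q.bil τ z : ℤ) := by
  rw [bil_eq_left y, bil_eq_left τ]; push_cast
  rw [Finset.mul_sum]
  exact Finset.sum_congr rfl fun i _ => by rw [h i]; ring

lemma affine_null {τ : Q.I → ℤ} (hτ : Q.InFund τ) (h : Q.bil τ τ = 0) (i : Q.I) (hi : τ i ≠ 0) :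
    Q.bil τ (Q.ev i) = 0 := by
  rw [bil_eq_right] at h
  have := (Finset.sum_eq_zero_iff_of_nonpos (fun i _ =>
    mul_nonpos_of_nonneg_of_nonpos (hτ.2.1 i) (hτ.2.2.2 i))).1 h i (Finset.mem_univ i)
  rcases mul_eq_zero.1 this with h | h
  · exact absurd h hi
  · exact h

lemma InU_affine {τ x : Q.I → ℤ} (hτ : Q.InFund τ) (h : Q.bil τ τ = 0)
    (hx : ∀ i, x i ≠ 0 → τ i ≠ 0) : Q.InU τ x :=
  fun i hi => ⟨hx i hi, affine_null hτ h i (hx i hi)⟩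

lemma Rplus_scale {τ y : Q.I → ℤ} (hτ : Q.InFund τ) (hl : Q.pair K l τ = 0)
    (h0 : Q.bil τ τ = 0) {s : ℚ} (hs : 0 < s) (h : ∀ i, (y i : ℚ) = s * τ i) :
    y ∈ Q.Rplus K l ∧ Q.pp y = 1 := by
  have hnn : ∀ i, 0 ≤ y i := fun i => by
    have : (0 : ℚ) ≤ y i := by
      rw [h i]; exact mul_nonneg hs.le (by exact_mod_cast hτ.2.1 i)
    exact_mod_cast this
  have hsupp : ∀ i, y i ≠ 0 ↔ τ i ≠ 0 := by
    intro i
    have h1 : ((y i : ℚ) = 0) ↔ ((τ i : ℚ) = 0) := by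
      rw [h i, mul_eq_zero]; simp [hs.ne']
    have h2 : y i = 0 ↔ τ i = 0 := by exact_mod_cast h1
    rw [Ne, h2]
  have hne : y ≠ 0 := by
    intro hy
    apply hτ.1
    funext i
    by_contra hi
    exact (hsupp i).2 hi (by rw [hy]; rfl)
  have hfund : Q.InFund y := by
    refine inFund_mk hnn hne ?_ ?_
    · intro T hT
      rcases hτ.conn T (fun i hi j hj h1 h2 =>
        hT i hi j hj ((hsupp i).2 h1) ((hsupp j).2 h2)) with h3 | h3
      · left; intro i hi; by_contra hc; exact (hsupp i).1 hc (h3 i hi)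
      · right; intro i hi; by_contra hc; exact (hsupp i).1 hc (h3 i hi)
    · intro i
      have h1 := rat_mul_bil h (Q.ev i)
      have h2 : ((Q.bil τ (Q.ev i) : ℤ) : ℚ) ≤ 0 := by exact_mod_cast hτ.2.2.2 i
      have h3 : ((Q.bil y (Q.ev i) : ℤ) : ℚ) ≤ 0 := by
        rw [h1]; exact mul_nonpos_of_nonneg_of_nonpos hs.le h2
      exact_mod_cast h3
  refine ⟨⟨hfund.isPosRoot, ?_⟩, ?_⟩
  · have hd : (s.den : ℤ) • y = s.num • τ := by
      funext i
      have h1 := h i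
      have h2 : s * s.den = s.num := Rat.mul_den_eq_num s
      have h3 : ((s.den * y i : ℤ) : ℚ) = ((s.num * τ i : ℤ) : ℚ) := by
        push_cast
        rw [h1, ← h2]; ring
      simp only [Pi.smul_apply, smul_eq_mul]
      exact_mod_cast h3
    have h4 : Q.pair K l ((s.den : ℤ) • y) = 0 := by
      rw [hd, pair_smul, hl, mul_zero]
    rw [pair_smul] at h4
    rcases mul_eq_zero.1 h4 with h5 | h5
    · exfalso
      have : s.den ≠ 0 := s.den_nz
      exact this (by exact_mod_cast h5)
    · exact h5
  · have h1 := rat_mul_bil h y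
    have h2 := rat_mul_bil h τ
    rw [bil_comm τ y] at h1
    rw [h2, h0] at h1
    have h3 : Q.bil y y = 0 := by
      have : ((Q.bil y y : ℤ) : ℚ) = 0 := by rw [h1]; simp
      exact_mod_cast this
    have := bil_self_even y
    omega

lemma iso {τ x : Q.I → ℤ} (hS : τ ∈ Q.SigmaSet K l) (hτ : Q.InFund τ) (hx : ∀ i, 0 ≤ x i)
    (hU : Q.InU τ x) (h0 : Q.bil x x ≤ 0) : ∃ m : ℕ, x = (m : ℤ) • τ := by
  obtain ⟨c, hc⟩ := hU.prop hτ h0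
  by_cases hx0 : x = 0
  · exact ⟨0, by simp [hx0]⟩
  have hex : ∃ i, x i ≠ 0 := by
    by_contra h; push Not at h; exact hx0 (funext h)
  obtain ⟨i0, hi0⟩ := hex
  have hτi0 : 0 < τ i0 := lt_of_le_of_ne (hτ.2.1 i0) (Ne.symm (hU i0 hi0).1)
  have hcpos : 0 < c := by
    have h1 := hc i0
    have h2 : (0 : ℚ) < x i0 := by exact_mod_cast lt_of_le_of_ne (hx i0) (Ne.symm hi0)
    have h3 : (0 : ℚ) < τ i0 := by exact_mod_cast hτi0
    rw [h1] at h2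
    exact pos_of_mul_pos_left h2 h3.le
  have haff : Q.bil τ τ = 0 := by
    apply InU.bil
    intro i hi
    refine ⟨hi, (hU i ?_).2⟩
    intro h
    have h1 := hc i
    rw [h] at h1
    have h2 : (τ i : ℚ) ≠ 0 := by exact_mod_cast hi
    simp [hcpos.ne', h2] at h1
  have hpτ : Q.pp τ = 1 := by have := bil_self_even τ; omega
  set k := ⌊c⌋ with hk
  have hk0 : 0 ≤ k := Int.floor_nonneg.2 hcpos.le
  by_cases hfr : c = k
  · refine ⟨k.toNat, ?_⟩
    rw [Int.toNat_of_nonneg hk0]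
    funext i
    have h1 := hc i
    rw [hfr] at h1
    simp only [Pi.smul_apply, smul_eq_mul]
    exact_mod_cast h1
  · exfalso
    have hlt : (k : ℚ) < c := lt_of_le_of_ne (Int.floor_le c) (Ne.symm hfr)
    have hlt2 : c < k + 1 := Int.lt_floor_add_one c
    obtain ⟨hy1, hy2⟩ := Rplus_scale (y := x - k • τ) hτ hS.1.2 haff (s := c - k) (by linarith)
      (by intro i; simp only [Pi.sub_apply, Pi.smul_apply, smul_eq_mul]; push_cast; rw [hc i]; ring)
    obtain ⟨hz1, hz2⟩ := Rplus_scale (y := τ - (x - k • τ)) hτ hS.1.2 haff (s := 1 - (c - k))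
      (by linarith)
      (by intro i; simp only [Pi.sub_apply, Pi.smul_apply, smul_eq_mul]; push_cast; rw [hc i]; ring)
    have := Sigma_lt_two hS hy1 hz1 (by abel)
    omega

lemma N1 {τ η : Q.I → ℤ} (hS : τ ∈ Q.SigmaSet K l) (hτ : Q.InFund τ) (hη : ∀ i, 0 ≤ η i)
    (hU : Q.InU τ η) (h2 : Q.bil η η ≤ 2) (hn : ¬ ∀ i, τ i ≤ η i) : ∀ i, η i ≤ τ i := by
  have hτ0 := hτ.2.1
  set w : Q.I → ℤ := fun i => max (η i - τ i) 0 with hw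
  set v : Q.I → ℤ := fun i => min (η i) (τ i) with hv
  have hwv : η = w + v := by
    funext i
    simp only [hw, hv, Pi.add_apply]
    omega
  have hw0 : ∀ i, 0 ≤ w i := fun i => le_max_right _ _
  have hv0 : ∀ i, 0 ≤ v i := fun i => le_min (hη i) (hτ0 i)
  have hUw : Q.InU τ w := by
    intro i hi
    apply hU
    intro h
    apply hi
    have := hτ0 i
    simp only [hw]; omega
  have hUv : Q.InU τ v := by
    intro i hi
    apply hU
    intro h
    apply hi
    have := hτ0 i
    simp only [hv]; omega
  have hwvn : 0 ≤ Q.bil v w := by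
    rw [bil_eq_right]
    refine Finset.sum_nonneg fun i _ => ?_
    by_cases hi : w i = 0
    · simp [hi]
    · refine mul_nonneg (hw0 i) ?_
      have e1 : Q.bil v (Q.ev i) = Q.bil τ (Q.ev i) - Q.bil (τ - v) (Q.ev i) := by
        rw [bil_sub_left]; ring
      have e2 : Q.bil (τ - v) (Q.ev i) ≤ 0 := by
        by_contra hc
        push Not at hc
        have := (pos_of_bil_pos (x := τ - v) (fun j => by
          simp only [Pi.sub_apply, hv]; omega) hc).2
        simp only [Pi.sub_apply, hv] at this
        simp only [hw] at hi
        omega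
      rw [e1, (hUw i hi).2]
      omega
  have hsq : Q.bil η η = Q.bil w w + 2 * Q.bil v w + Q.bil v v := by
    rw [hwv]; simp only [bil_add_left, bil_add_right, bil_comm w v]; ring
  have hww := hUw.sq_nonneg hτ0
  have hvv := hUv.sq_nonneg hτ0
  have e1 := bil_self_even w
  have e2 := bil_self_even v
  rcases (show Q.bil w w ≤ 0 ∨ Q.bil v v ≤ 0 by omega) with h | h
  · obtain ⟨m, hm⟩ := iso hS hτ hw0 hUw h
    have hm0 : m = 0 := by
      by_contra hm0
      apply hn
      intro i
      have h3 := congrFun hm i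
      have h5 := congrFun hwv i
      simp only [Pi.smul_apply, smul_eq_mul, Pi.add_apply] at h3 h5
      have := hτ0 i
      have := hv0 i
      have hm1 : (1 : ℤ) ≤ m := by omega
      nlinarith
    intro i
    have h3 := congrFun hm i
    simp only [hm0, hw] at h3
    simp at h3
    exact h3
  · obtain ⟨m, hm⟩ := iso hS hτ hv0 hUv h
    have hm0 : m = 0 := by
      by_contra hm0
      apply hn
      intro i
      have h3 := congrFun hm i
      have h5 := congrFun hwv i
      simp only [Pi.smul_apply, smul_eq_mul, Pi.add_apply] at h3 h5
      have := hτ0 i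
      have := hw0 i
      have hm1 : (1 : ℤ) ≤ m := by omega
      nlinarith
    intro i
    have h3 := congrFun hm i
    simp only [hm0, hv] at h3
    simp at h3
    by_contra hc
    have := hτ0 i
    have h4 := hU i (by omega)
    have := h4.1
    omega

lemma N2 {τ b : Q.I → ℤ} (hS : τ ∈ Q.SigmaSet K l) (hτ : Q.InFund τ) (hb : ∀ i, 0 ≤ b i)
    (hU : Q.InU τ b) (hn : ¬ ∀ i, τ i ≤ b i) {c : Q.I} (hc : τ c = 1)
    (hbil : ∀ i, τ i ≠ 0 → Q.bil τ (Q.ev i) = 0 → Q.bil b (Q.ev i) ≤ Q.ev c i) : b = 0 := by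
  by_contra hb0
  let P : ℕ → Prop := fun n => ∃ η : Q.I → ℤ, (∀ i, 0 ≤ η i) ∧ (∀ i, η i ≤ b i) ∧ η ≠ 0 ∧
    Q.bil η η ≤ 2 ∧ Q.ht η = n
  have hex : ∃ i, b i ≠ 0 := by
    by_contra h; push Not at h; exact hb0 (funext h)
  obtain ⟨i0, hi0⟩ := hex
  have hP1 : P 1 := by
    refine ⟨Q.ev i0, ev_nonneg i0, fun i => ?_, ev_ne_zero i0, bil_ev_le_two i0, by simp [ht_ev]⟩
    by_cases h : i = i0
    · subst h; rw [ev_self]; have := hb i; omega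
    · rw [ev_ne h]; exact hb i
  have hbd : ∀ n, P n → n ≤ (Q.ht b).toNat := by
    rintro n ⟨η, h1, h2, h3, h4, h5⟩
    have : Q.ht η ≤ Q.ht b := Finset.sum_le_sum fun i _ => h2 i
    omega
  classical
  have hPm := Nat.findGreatest_spec (P := P) (hbd 1 hP1) hP1
  set n := Nat.findGreatest P (Q.ht b).toNat with hn'
  have hmax : ∀ m, P m → m ≤ n := fun m hm => Nat.le_findGreatest (hbd m hm) hm
  obtain ⟨η, h1, h2, h3, h4, h5⟩ := hPm
  have hUη : Q.InU τ η := fun i hi => hU i (by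
    intro h; apply hi; have := h1 i; have := h2 i; omega)
  have hnη : ¬ ∀ i, τ i ≤ η i := fun h => hn fun i => (h i).trans (h2 i)
  have hηpos : 0 < Q.bil η η := by
    by_contra hneg
    push Not at hneg
    obtain ⟨m, hm⟩ := iso hS hτ h1 hUη hneg
    apply hnη
    intro i
    have hm0 : m ≠ 0 := by rintro rfl; exact h3 (by simpa using hm)
    have h6 := congrFun hm i
    simp only [Pi.smul_apply, smul_eq_mul] at h6
    have := hτ.2.1 i
    have hm1 : (1 : ℤ) ≤ m := by omega
    nlinarith
  have heven := bil_self_even η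
  have hle := N1 hS hτ h1 hUη h4 hnη
  have hpair : 0 ≤ Q.bil η (b - η) := by
    rw [bil_eq_right]
    refine Finset.sum_nonneg fun i _ => ?_
    simp only [Pi.sub_apply]
    by_cases hi : b i = η i
    · simp [hi]
    · refine mul_nonneg (by have := h2 i; omega) ?_
      by_contra hneg
      push Not at hneg
      have : P (n + 1) := by
        refine ⟨η + Q.ev i, fun j => add_nonneg (h1 j) (ev_nonneg i j), fun j => ?_, ?_, ?_, ?_⟩
        · simp only [Pi.add_apply]
          by_cases h : j = i
          · subst h; rw [ev_self]; have := h2 j; omega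
          · rw [ev_ne h, add_zero]; exact h2 j
        · intro h
          have := congrFun h i
          simp only [Pi.add_apply, ev_self, Pi.zero_apply] at this
          have := h1 i
          omega
        · simp only [bil_add_left, bil_add_right, bil_comm (Q.ev i) η]
          have := bil_ev_le_two i
          omega
        · rw [ht_add, ht_ev, h5]; push_cast; ring
      have := hmax _ this
      omega
  rw [bil_sub_right] at hpair
  have hub : Q.bil η b ≤ η c := by
    rw [bil_comm, bil_eq_right]
    calc ∑ i, η i * Q.bil b (Q.ev i) ≤ ∑ i, η i * Q.ev c i := by
          refine Finset.sum_le_sum fun i _ => ?_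
          by_cases hi : η i = 0
          · simp [hi]
          · exact mul_le_mul_of_nonneg_left (hbil i (hUη i hi).1 (hUη i hi).2) (h1 i)
      _ = η c := by simp [ev]
  have := hle c
  omega

end Null

end Part4

section Part5

section Tree

variable {Q : FinQuiver}

/-- Separation hypothesis: it suffices to treat subsets avoiding a vertex `u` of the support. -/
lemma conn_of_avoid {x : Q.I → ℤ} (u : Q.I)
    (h : ∀ T : Set Q.I, u ∉ T →
      (∀ i ∈ T, ∀ j ∉ T, x i ≠ 0 → x j ≠ 0 → Q.bil (Q.ev i) (Q.ev j) = 0) → ∀ i ∈ T, x i = 0) :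
    Q.Conn x := by
  intro T hT
  by_cases hu : u ∈ T
  · right
    refine h Tᶜ (by simpa using hu) ?_
    intro i hi j hj h1 h2
    rw [bil_comm]
    exact hT j (by simpa using hj) i hi h2 h1
  · left
    exact h T hu hT

lemma bil_ev_expand (x : Q.I → ℤ) (v : Q.I) :
    Q.bil x (Q.ev v) = x v * Q.bil (Q.ev v) (Q.ev v)
      + ∑ k ∈ Finset.univ.erase v, x k * Q.bil (Q.ev k) (Q.ev v) := by
  rw [bil_eq_left, ← Finset.add_sum_erase _ _ (Finset.mem_univ v)]

lemma bil_ev_nonpos_of_zero {x : Q.I → ℤ} (hx : ∀ i, 0 ≤ x i) {i : Q.I} (h : x i = 0) :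
    Q.bil x (Q.ev i) ≤ 0 := by
  by_contra hc
  push Not at hc
  have := (pos_of_bil_pos hx hc).2
  omega

lemma sum_eq_neg_one {ι : Type*} [DecidableEq ι] (s : Finset ι) (f : ι → ℤ) (hf : ∀ i ∈ s, f i ≤ 0)
    (h : ∑ i ∈ s, f i = -1) : ∃ u ∈ s, f u = -1 ∧ ∀ i ∈ s, i ≠ u → f i = 0 := by
  have h1 : ∃ u ∈ s, f u < 0 := by
    by_contra hc
    push Not at hc
    have := Finset.sum_nonneg hc
    omega
  obtain ⟨u, hu, hu2⟩ := h1
  rw [← Finset.add_sum_erase _ _ hu] at h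
  have h3 : ∀ i ∈ s.erase u, f i ≤ 0 := fun i hi => hf i (Finset.mem_of_mem_erase hi)
  have h2 := Finset.sum_nonpos h3
  have h4 : ∑ i ∈ s.erase u, f i = 0 := by omega
  refine ⟨u, hu, by omega, fun i hi hne => ?_⟩
  exact (Finset.sum_eq_zero_iff_of_nonpos h3).1 h4 i (Finset.mem_erase.2 ⟨hne, hi⟩)

lemma lemT_aux : ∀ N : ℕ, ∀ (x : Q.I → ℤ) (v : Q.I), Q.ht x < N → (∀ i, 0 ≤ x i) → Q.Conn x →
    x v = 1 → (∀ i, i ≠ v → Q.bil x (Q.ev i) ≤ 0) → Q.IsPosRoot x := by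
  intro N
  induction N with
  | zero => intro x v h hx; have := ht_nonneg hx; norm_cast at h; omega
  | succ N ih =>
    intro x v hN hx hc hv hle
    have hx0 : x ≠ 0 := by rintro rfl; simp at hv
    by_cases hv0 : Q.bil x (Q.ev v) ≤ 0
    · refine (inFund_mk hx hx0 hc fun i => ?_).isPosRoot
      by_cases h : i = v
      · rw [h]; exact hv0
      · exact hle i h
    push Not at hv0
    have hlf := (pos_of_bil_pos hx hv0).1
    have hexp := bil_ev_expand x v
    rw [hv, bil_ev_self_loopfree hlf] at hexp
    have hterm : ∀ k ∈ Finset.univ.erase v, x k * Q.bil (Q.ev k) (Q.ev v) ≤ 0 := fun k hk =>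
      mul_nonpos_of_nonneg_of_nonpos (hx k) (bil_ev_le (Finset.ne_of_mem_erase hk))
    have hsum := Finset.sum_nonpos hterm
    rcases (show ∑ k ∈ Finset.univ.erase v, x k * Q.bil (Q.ev k) (Q.ev v) = 0 ∨
        ∑ k ∈ Finset.univ.erase v, x k * Q.bil (Q.ev k) (Q.ev v) = -1 by omega) with h | h
    · have hz := (Finset.sum_eq_zero_iff_of_nonpos hterm).1 h
      rcases hc {v} (by
        intro i hi j hj h1 h2
        rw [Set.mem_singleton_iff] at hi hj
        subst hi
        have := hz j (Finset.mem_erase.2 ⟨hj, Finset.mem_univ _⟩)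
        rw [bil_comm]
        rcases mul_eq_zero.1 this with h3 | h3
        · exact absurd h3 h2
        · exact h3) with h1 | h1
      · have := h1 v rfl; omega
      · have : x = Q.ev v := by
          funext j
          by_cases hj : j = v
          · rw [hj, hv, ev_self]
          · rw [h1 j hj, ev_ne hj]
        rw [this]; exact isPosRoot_ev hlf
    · obtain ⟨u, hu, hu1, hu2⟩ := sum_eq_neg_one _ _ hterm h
      have huv : u ≠ v := Finset.ne_of_mem_erase hu
      have hxu : x u = 1 := by
        have h1 := hx u
        have h2 := bil_ev_le huv
        have h3 : x u ∣ 1 := ⟨-Q.bil (Q.ev u) (Q.ev v), by linarith⟩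
        exact Int.eq_one_of_dvd_one h1 h3
      have hb1 : Q.bil x (Q.ev v) = 1 := by omega
      have hnb : ∀ j, j ≠ v → j ≠ u → x j ≠ 0 → Q.bil (Q.ev j) (Q.ev v) = 0 := by
        intro j hj1 hj2 hj3
        have := hu2 j (Finset.mem_erase.2 ⟨hj1, Finset.mem_univ _⟩) hj2
        rcases mul_eq_zero.1 this with h3 | h3
        · exact absurd h3 hj3
        · exact h3
      set y := Q.refl v x with hy
      have hyv : y v = 0 := by rw [hy, refl_apply_self, hb1, hv]; ring
      have hyj : ∀ j, j ≠ v → y j = x j := fun j hj => refl_apply_ne hj x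
      have hy0 : ∀ i, 0 ≤ y i := by
        intro i
        by_cases hi : i = v
        · rw [hi, hyv]
        · rw [hyj i hi]; exact hx i
      have hyu : y u = 1 := by rw [hyj u huv, hxu]
      have hyroot : Q.IsPosRoot y := by
        refine ih y u (by rw [hy, ht_refl, hb1]; push_cast at hN; omega) hy0 ?_ hyu ?_
        · refine conn_of_avoid u fun T huT hT => ?_
          have := hc (T \ {v}) (by
            rintro i ⟨hi, hiv⟩ j hj h1 h2
            rw [Set.mem_singleton_iff] at hiv
            by_cases hjv : j = v
            · subst hjv
              exact hnb i hiv (fun h => huT (h ▸ hi)) h1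
            · have hjT : j ∉ T := fun h => hj ⟨h, hjv⟩
              exact hT i hi j hjT (by rwa [hyj i hiv]) (by rwa [hyj j hjv]))
          rcases this with h1 | h1
          · intro i hi
            by_cases hiv : i = v
            · rw [hiv, hyv]
            · rw [hyj i hiv]; exact h1 i ⟨hi, hiv⟩
          · have := h1 u (fun h => huT h.1); omega
        · intro i hi
          by_cases hiv : i = v
          · rw [hiv]; exact bil_ev_nonpos_of_zero hy0 hyv
          · by_cases hxi : x i = 0
            · exact bil_ev_nonpos_of_zero hy0 (by rw [hyj i hiv, hxi])
            · rw [hy, refl, bil_sub_left, bil_smul_left, hb1, bil_comm (Q.ev v), hnb i hiv hi hxi]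
              have := hle i hiv
              omega
      have := hyroot.refl hlf (by intro h; rw [h, ev_self] at hyv; omega)
      rwa [hy, refl_refl hlf] at this

lemma lemT {x : Q.I → ℤ} {v : Q.I} (hx : ∀ i, 0 ≤ x i) (hc : Q.Conn x)
    (hv : x v = 1) (h : ∀ i, i ≠ v → Q.bil x (Q.ev i) ≤ 0) : Q.IsPosRoot x :=
  lemT_aux ((Q.ht x).toNat + 1) x v (by push_cast; omega) hx hc hv h

/-- pairing only depends on coordinates adjacent to `i` -/
lemma bil_ev_congr {x y : Q.I → ℤ} {i : Q.I}
    (h : ∀ k, x k = y k ∨ Q.bil (Q.ev k) (Q.ev i) = 0) : Q.bil x (Q.ev i) = Q.bil y (Q.ev i) := by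
  rw [bil_eq_left, bil_eq_left y]
  refine Finset.sum_congr rfl fun k _ => ?_
  rcases h k with h | h
  · rw [h]
  · rw [h]; ring

lemma lemC_aux (S : Set Q.I) (u : Q.I) (hu : u ∉ S) : ∀ N : ℕ, ∀ (x y : Q.I → ℤ), Q.ht x < N →
    Q.IsPosRoot x → x u = 1 → (∀ i, 0 ≤ y i) → (∀ i, i ∉ S → y i = x i) →
    (∀ s ∈ S, ∀ i ∉ S, i ≠ u → x i ≠ 0 → Q.bil (Q.ev s) (Q.ev i) = 0) →
    (∀ i ∈ S, Q.bil y (Q.ev i) ≤ 0) →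
    (∀ T : Set Q.I, T ⊆ S →
      (∀ i ∈ T, ∀ j ∉ T, y i ≠ 0 → y j ≠ 0 → Q.bil (Q.ev i) (Q.ev j) = 0) → ∀ i ∈ T, y i = 0) →
    Q.IsPosRoot y := by
  intro N
  induction N with
  | zero => intro x y h hx; have := ht_nonneg hx.nonneg; norm_cast at h; omega
  | succ N ih =>
    intro x y hN hx hxu hy hyx hnadj hle hT
    have hbil : ∀ i, i ∉ S → i ≠ u → x i ≠ 0 → Q.bil y (Q.ev i) = Q.bil x (Q.ev i) := by
      intro i hi hiu hxi
      refine bil_ev_congr fun k => ?_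
      by_cases hk : k ∈ S
      · right; exact hnadj k hk i hi hiu hxi
      · left; exact hyx k hk
    by_cases hex : ∃ i, i ∉ S ∧ i ≠ u ∧ 0 < Q.bil x (Q.ev i)
    · obtain ⟨i, hiS, hiu, hpos⟩ := hex
      obtain ⟨hlf, hxi⟩ := pos_of_bil_pos hx.nonneg hpos
      have hbi := hbil i hiS hiu hxi.ne'
      have hxe : x ≠ Q.ev i := by
        intro h; rw [h, ev_ne (Ne.symm hiu)] at hxu; omega
      have hx' := hx.refl hlf hxe
      have hyu : y u = 1 := by rw [hyx u hu, hxu]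
      have hsupp : ∀ j, Q.refl i x j ≠ 0 → x j ≠ 0 := by
        intro j hj
        by_cases hji : j = i
        · rw [hji]; exact hxi.ne'
        · rwa [refl_apply_ne hji] at hj
      have := ih (Q.refl i x) (Q.refl i y) (by rw [ht_refl]; push_cast at hN; omega) hx'
        (by rw [refl_apply_ne (Ne.symm hiu), hxu])
        (by
          intro j
          by_cases hji : j = i
          · subst hji
            rw [refl_apply_self, hbi, hyx j hiS, ← refl_apply_self]; exact hx'.nonneg j
          · rw [refl_apply_ne hji]; exact hy j)
        (by
          intro j hj
          by_cases hji : j = i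
          · subst hji
            rw [refl_apply_self, refl_apply_self, hbi, hyx j hiS]
          · rw [refl_apply_ne hji, refl_apply_ne hji, hyx j hj])
        (fun s hs j hj hju hxj => hnadj s hs j hj hju (hsupp j hxj))
        (by
          intro s hs
          rw [refl, bil_sub_left, bil_smul_left, bil_comm (Q.ev i),
            hnadj s hs i hiS hiu hxi.ne', mul_zero, sub_zero]
          exact hle s hs)
        (by
          intro T hTS hsep j hj
          have hne : ∀ k ∈ T, k ≠ i := fun k hk h => hiS (h ▸ hTS hk)
          rw [refl_apply_ne (hne j hj)]
          refine hT T hTS ?_ j hj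
          intro a ha b hb h1 h2
          by_cases hbi' : b = i
          · subst hbi'; exact hnadj a (hTS ha) b hiS hiu hxi.ne'
          · exact hsep a ha b hb (by rwa [refl_apply_ne (hne a ha)])
              (by rwa [refl_apply_ne hbi']))
      have h2 := this.refl hlf (by
        intro h
        have h3 := congrFun h u
        rw [refl_apply_ne (Ne.symm hiu), ev_ne (Ne.symm hiu), hyu] at h3
        omega)
      rwa [refl_refl hlf] at h2
    · push Not at hex
      have hyu : y u = 1 := by rw [hyx u hu, hxu]
      refine lemT hy ?_ hyu ?_
      · refine conn_of_avoid u fun T huT hsep => ?_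
        have hTS : ∀ i ∈ T ∩ S, y i = 0 := by
          refine hT (T ∩ S) Set.inter_subset_right ?_
          rintro i ⟨hi1, hi2⟩ j hj h1 h2
          by_cases hjT : j ∈ T
          · have hjS : j ∉ S := fun h => hj ⟨hjT, h⟩
            exact hnadj i hi2 j hjS (fun h => huT (h ▸ hjT)) (by rwa [← hyx j hjS])
          · exact hsep i hi1 j hjT h1 h2
        rcases hx.conn (T \ S) (by
          rintro i ⟨hi1, hi2⟩ j hj h1 h2
          by_cases hjS : j ∈ S
          · rw [bil_comm]
            exact hnadj j hjS i hi2 (fun h => huT (h ▸ hi1)) h1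
          · have hjT : j ∉ T := fun h => hj ⟨h, hjS⟩
            exact hsep i hi1 j hjT (by rwa [hyx i hi2]) (by rwa [hyx j hjS])) with h1 | h1
        · intro i hi
          by_cases hiS : i ∈ S
          · exact hTS i ⟨hi, hiS⟩
          · rw [hyx i hiS]; exact h1 i ⟨hi, hiS⟩
        · have := h1 u (fun h => huT h.1); omega
      · intro i hiu
        by_cases hiS : i ∈ S
        · exact hle i hiS
        · by_cases hxi : x i = 0
          · exact bil_ev_nonpos_of_zero hy (by rw [hyx i hiS, hxi])
          · rw [hbil i hiS hiu hxi]; exact hex i hiS hiu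

lemma lemC {S : Set Q.I} {u : Q.I} (hu : u ∉ S) {x y : Q.I → ℤ}
    (hx : Q.IsPosRoot x) (hxu : x u = 1) (hy : ∀ i, 0 ≤ y i) (hyx : ∀ i, i ∉ S → y i = x i)
    (hnadj : ∀ s ∈ S, ∀ i ∉ S, i ≠ u → x i ≠ 0 → Q.bil (Q.ev s) (Q.ev i) = 0)
    (hle : ∀ i ∈ S, Q.bil y (Q.ev i) ≤ 0)
    (hT : ∀ T : Set Q.I, T ⊆ S →
      (∀ i ∈ T, ∀ j ∉ T, y i ≠ 0 → y j ≠ 0 → Q.bil (Q.ev i) (Q.ev j) = 0) → ∀ i ∈ T, y i = 0) :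
    Q.IsPosRoot y :=
  lemC_aux S u hu ((Q.ht x).toNat + 1) x y (by push_cast; omega) hx hxu hy hyx hnadj hle hT

lemma R2_aux {τ : Q.I → ℤ} (hτ : Q.InFund τ) : ∀ N : ℕ, ∀ x : Q.I → ℤ, Q.ht x < N →
    (∀ i, 0 ≤ x i) → Q.InU τ x → Q.bil x x = 2 → Q.IsPosRoot x := by
  intro N
  induction N with
  | zero => intro x h hx; have := ht_nonneg hx; norm_cast at h; omega
  | succ N ih =>
    intro x hN hx hU h2
    have hex : ∃ i, x i ≠ 0 ∧ 0 < Q.bil x (Q.ev i) := by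
      by_contra hc
      push Not at hc
      have := bil_nonpos_of_nonneg hx hc
      omega
    obtain ⟨i, hxi, hpos⟩ := hex
    have hlf := (pos_of_bil_pos hx hpos).1
    by_cases hk : Q.bil x (Q.ev i) ≤ x i
    · have hroot := ih (Q.refl i x) (by rw [ht_refl]; push_cast at hN; omega)
        (by
          intro j
          by_cases hji : j = i
          · subst hji; rw [refl_apply_self]; omega
          · rw [refl_apply_ne hji]; exact hx j)
        (by
          intro j hj
          by_cases hji : j = i
          · rw [hji]; exact hU i hxi
          · rw [refl_apply_ne hji] at hj; exact hU j hj)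
        (by rw [bil_refl hlf, h2])
      have := hroot.refl hlf (by
        intro h
        have h3 := bil_refl_ev hlf x
        rw [h, bil_ev_self_loopfree hlf] at h3
        omega)
      rwa [refl_refl hlf] at this
    · push Not at hk
      obtain ⟨z, hz⟩ : ∃ z, z = x - x i • Q.ev i := ⟨_, rfl⟩
      have hzi : z i = 0 := by simp [hz, ev_self]
      have hzj : ∀ j, j ≠ i → z j = x j := fun j hj => by simp [hz, ev_ne hj]
      have hz0 : ∀ j, 0 ≤ z j := by
        intro j
        by_cases hji : j = i
        · rw [hji, hzi]
        · rw [hzj j hji]; exact hx j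
      have hUz : Q.InU τ z := by
        intro j hj
        by_cases hji : j = i
        · rw [hji] at hj; exact absurd hzi hj
        · rw [hzj j hji] at hj; exact hU j hj
      have hxz : x = z + x i • Q.ev i := by rw [hz]; simp
      have hb := bil_ev_nonpos_of_zero hz0 hzi
      have hzz := hUz.sq_nonneg hτ.2.1
      have e1 : Q.bil x (Q.ev i) = Q.bil z (Q.ev i) + 2 * x i := by
        conv_lhs => rw [hxz]
        rw [bil_add_left, bil_smul_left, bil_ev_self_loopfree hlf]; ring
      have e2 : Q.bil x x = Q.bil z z + 2 * x i * Q.bil z (Q.ev i) + 2 * (x i * x i) := by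
        conv_lhs => rw [hxz]
        simp only [bil_add_left, bil_add_right, bil_smul_left, bil_smul_right,
          bil_ev_self_loopfree hlf, bil_comm (Q.ev i) z]
        ring
      have hxi0 : 0 < x i := lt_of_le_of_ne (hx i) (Ne.symm hxi)
      have hzn : Q.bil z z ≤ 0 := by
        have h3 : 1 ≤ x i + Q.bil z (Q.ev i) := by omega
        have h4 : x i * 1 ≤ x i * (x i + Q.bil z (Q.ev i)) := mul_le_mul_of_nonneg_left h3 hxi0.le
        nlinarith
      obtain ⟨c, hc⟩ := hUz.prop hτ hzn
      have hc0 : c = 0 := by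
        have h3 := hc i
        rw [hzi] at h3
        have h4 : (τ i : ℚ) ≠ 0 := by exact_mod_cast (hU i hxi).1
        simpa [h4] using h3
      have hz00 : z = 0 := by
        funext j
        have h3 := hc j
        rw [hc0, zero_mul] at h3
        exact_mod_cast h3
      rw [hz00, zero_add] at hxz
      rw [hz00, bil_zero_left, bil_zero_left, h2] at e2
      have hx1 : x i = 1 := by nlinarith
      rw [hxz, hx1, one_smul]
      exact isPosRoot_ev hlf

lemma R2 {τ x : Q.I → ℤ} (hτ : Q.InFund τ) (hx : ∀ i, 0 ≤ x i) (hU : Q.InU τ x)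
    (h2 : Q.bil x x = 2) : Q.IsPosRoot x :=
  R2_aux hτ ((Q.ht x).toNat + 1) x (by push_cast; omega) hx hU h2

end Tree

section Sub

variable {Q : FinQuiver} {K : Type} [Field K] [CharZero K] {l : Q.I → K}

lemma pp_of_sq_two {x : Q.I → ℤ} (h : Q.bil x x = 2) : Q.pp x = 0 := by
  have := bil_self_even x; omega

lemma lemSub {τ : Q.I → ℤ} (hS : τ ∈ Q.SigmaSet K l) (hτ : Q.InFund τ) (h0 : Q.bil τ τ = 0)
    {ι : Type} (J : Finset ι) (β : ι → Q.I → ℤ) (hJ : J.Nonempty)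
    (hβ : ∀ j ∈ J, β j ∈ Q.SigmaSet K l) (hU : ∀ j ∈ J, Q.InU τ (β j))
    (hN : ∀ x ∈ Q.Rplus K l, Q.InU τ x → (∀ i, x i ≤ τ i) → Q.bil x x = 2 →
      Q.bil x (∑ j ∈ J, β j) ≤ 1) : ∃ C ⊆ J, ∑ j ∈ C, β j = τ := by
  classical
  have hτ0 := hτ.2.1
  have hpτ : Q.pp τ = 1 := by have := bil_self_even τ; omega
  have hUle : ∀ x : Q.I → ℤ, (∀ i, x i ≠ 0 → τ i ≠ 0) → Q.InU τ x :=
    fun x hx => InU_affine hτ h0 hx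
  by_cases him : ∃ j ∈ J, Q.bil (β j) (β j) ≤ 0
  · obtain ⟨j, hj, hjj⟩ := him
    obtain ⟨m, hm⟩ := iso hS hτ (hβ j hj).1.1.nonneg (hU j hj) hjj
    refine ⟨{j}, by simpa using hj, ?_⟩
    rw [Finset.sum_singleton]
    rcases (show m = 0 ∨ m = 1 ∨ 2 ≤ m by omega) with h | h | h
    · exact absurd (by rw [hm, h]; simp) (hβ j hj).1.1.2.2
    · rw [hm, h]; simp
    · exfalso
      have h2 : (2 : ℚ) ≤ m := by exact_mod_cast h
      obtain ⟨a1, a2⟩ := Rplus_scale (y := ((m : ℤ) - 1) • τ) hτ hS.1.2 h0 (s := m - 1)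
        (by linarith) (by intro i; simp)
      obtain ⟨b1, b2⟩ := Rplus_scale (y := β j) hτ hS.1.2 h0 (s := m)
        (by linarith) (by intro i; rw [hm]; simp)
      have := Sigma_lt_two (hβ j hj) hS.1 a1 (by rw [hm]; module)
      omega
  push Not at him
  have hre : ∀ j ∈ J, Q.bil (β j) (β j) = 2 := fun j hj => by
    rcases (hβ j hj).1.1.sq with h | h
    · exact h
    · exact absurd (him j hj) (by omega)
  have hle : ∀ j ∈ J, ∀ i, β j i ≤ τ i := by
    intro j hj
    refine N1 hS hτ (hβ j hj).1.1.nonneg (hU j hj) (hre j hj).le ?_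
    intro hge
    have hUd : Q.InU τ (β j - τ) := hUle _ fun i hi h => by
      have : β j i = 0 := by
        by_contra hc; exact (hU j hj i hc).1 h
      simp [h, this] at hi
    have hsq : Q.bil (β j - τ) (β j - τ) = 2 := by
      have e1 := (hU j hj).bil
      simp only [bil_sub_left, bil_sub_right, bil_comm (β j) τ, e1, hre j hj, h0]
      ring
    have hroot := R2 hτ (fun i => by have := hge i; simp only [Pi.sub_apply]; omega) hUd hsq
    have := Sigma_lt_two (hβ j hj) hS.1 (z := β j - τ)
      ⟨hroot, by rw [pair_sub, (hβ j hj).1.2, hS.1.2, sub_zero]⟩ (by abel)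
    rw [hpτ, pp_of_sq_two hsq, pp_of_sq_two (hre j hj)] at this
    omega
  by_contra hcon
  push Not at hcon
  have grow : ∀ k : ℕ, ∃ C ⊆ J, C.card = k + 1 ∧ Q.bil (∑ j ∈ C, β j) (∑ j ∈ C, β j) = 2 ∧
      ∀ i, (∑ j ∈ C, β j) i ≤ τ i := by
    intro k
    induction k with
    | zero =>
      obtain ⟨j, hj⟩ := hJ
      exact ⟨{j}, by simpa using hj, by simp, by simpa using hre j hj, by simpa using hle j hj⟩
    | succ k ih =>
      obtain ⟨C, hC, hcard, hs2, hsle⟩ := ih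
      set s := ∑ j ∈ C, β j with hs
      have hs0 : ∀ i, 0 ≤ s i := fun i => by
        rw [hs, Finset.sum_apply]
        exact Finset.sum_nonneg fun j hj => (hβ j (hC hj)).1.1.nonneg i
      have hUs : Q.InU τ s := hUle _ fun i hi h => hi (by
        have := hs0 i; have := hsle i; omega)
      have hspair : Q.pair K l s = 0 := by
        rw [hs, pair_sum]; exact Finset.sum_eq_zero fun j hj => (hβ j (hC hj)).1.2
      have hsR : s ∈ Q.Rplus K l := ⟨R2 hτ hs0 hUs hs2, hspair⟩
      have h1 := hN s hsR hUs hsle hs2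
      rw [← Finset.sum_sdiff hC, ← hs, bil_add_right, hs2, bil_sum_right] at h1
      have hex : ∃ j ∈ J \ C, Q.bil s (β j) < 0 := by
        by_contra hc
        push Not at hc
        have := Finset.sum_nonneg hc
        omega
      obtain ⟨j, hj, hneg⟩ := hex
      obtain ⟨hjJ, hjC⟩ := Finset.mem_sdiff.1 hj
      have hsub : insert j C ⊆ J := Finset.insert_subset hjJ hC
      have hsum : ∑ k ∈ insert j C, β k = s + β j := by
        rw [Finset.sum_insert hjC, add_comm]
      have hsq : Q.bil (s + β j) (s + β j) = 4 + 2 * Q.bil s (β j) := by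
        simp only [bil_add_left, bil_add_right, bil_comm (β j) s, hs2, hre j hjJ]; ring
      have hUsj : Q.InU τ (s + β j) := hUle _ fun i hi h => by
        have h3 : s i = 0 := by by_contra hc; exact (hUs i hc).1 h
        have h4 : β j i = 0 := by by_contra hc; exact (hU j hjJ i hc).1 h
        simp [h3, h4] at hi
      have hsj0 : ∀ i, 0 ≤ (s + β j) i := fun i => add_nonneg (hs0 i) ((hβ j hjJ).1.1.nonneg i)
      have hsq2 : Q.bil (s + β j) (s + β j) = 2 := by
        by_contra hne
        have heven := bil_self_even (s + β j)
        obtain ⟨m, hm⟩ := iso hS hτ hsj0 hUsj (by omega)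
        rcases (show m = 0 ∨ m = 1 ∨ 2 ≤ m by omega) with h | h | h
        · apply hsR.1.2.2
          funext i
          have h3 := congrFun hm i
          simp only [h, Pi.add_apply, Pi.smul_apply] at h3
          have := hs0 i
          have := (hβ j hjJ).1.1.nonneg i
          simp at h3
          simp only [Pi.zero_apply]
          omega
        · exact hcon _ hsub (by rw [hsum, hm, h]; simp)
        · have : s = τ := by
            funext i
            have h3 := congrFun hm i
            simp only [Pi.add_apply, Pi.smul_apply, smul_eq_mul] at h3
            have h4 := hsle i
            have h5 := hle j hjJ i
            have h6 := hτ0 i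
            have h7 : (2 : ℤ) ≤ m := by exact_mod_cast h
            nlinarith
          rw [this, h0] at hs2
          omega
      refine ⟨insert j C, hsub, by rw [Finset.card_insert_of_notMem hjC, hcard], ?_, ?_⟩
      · rw [hsum, hsq2]
      · rw [hsum]
        refine N1 hS hτ hsj0 hUsj hsq2.le ?_
        intro hge
        have hb1 : Q.bil τ (s + β j) = 0 := hUsj.bil
        have hb2 : Q.bil τ s = 0 := hUs.bil
        have hsqξ : Q.bil (s + β j - τ) (s + β j - τ) = 2 := by
          rw [bil_sub_left, bil_sub_right, bil_sub_right, bil_comm (s + β j) τ, hb1, h0, hsq2]; ring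
        have hsqt : Q.bil (τ - s) (τ - s) = 2 := by
          rw [bil_sub_left, bil_sub_right, bil_sub_right, bil_comm s τ, hb2, h0, hs2]; ring
        have hUξ : Q.InU τ (s + β j - τ) := hUle _ fun i hi h => by
          have h3 : (s + β j) i = 0 := by by_contra hc; exact (hUsj i hc).1 h
          rw [Pi.sub_apply, h3, h] at hi
          exact hi (by ring)
        have hUt : Q.InU τ (τ - s) := hUle _ fun i hi h => by
          have h3 : s i = 0 := by by_contra hc; exact (hUs i hc).1 h
          rw [Pi.sub_apply, h3, h] at hi
          exact hi (by ring)
        have hr1 := R2 hτ (fun i => by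
          have := hge i; rw [Pi.sub_apply]; omega) hUξ hsqξ
        have hr2 := R2 hτ (fun i => by
          have := hsle i; rw [Pi.sub_apply]; omega) hUt hsqt
        have := Sigma_lt_two (hβ j hjJ) (y := s + β j - τ) (z := τ - s)
          ⟨hr1, by rw [pair_sub, pair_add, hspair, (hβ j hjJ).1.2, hS.1.2]; ring⟩
          ⟨hr2, by rw [pair_sub, hspair, hS.1.2]; ring⟩ (by abel)
        rw [pp_of_sq_two hsqξ, pp_of_sq_two hsqt, pp_of_sq_two (hre j hjJ)] at this
        omega
  obtain ⟨C, hC, hcard, -⟩ := grow J.card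
  have := Finset.card_le_card hC
  omega

end Sub

end Part5

section Part6

section Fin1
variable {Q : FinQuiver}

lemma nonadj_of_zero {τ : Q.I → ℤ} (hτ : ∀ i, 0 ≤ τ i) {k : Q.I} (hk : τ k = 0)
    (h : Q.bil τ (Q.ev k) = 0) (i : Q.I) (hi : τ i ≠ 0) : Q.bil (Q.ev i) (Q.ev k) = 0 := by
  rw [bil_eq_left] at h
  have hle : ∀ j ∈ Finset.univ, τ j * Q.bil (Q.ev j) (Q.ev k) ≤ 0 := by
    intro j _
    by_cases hj : j = k
    · subst hj; simp [hk]
    · exact mul_nonpos_of_nonneg_of_nonpos (hτ j) (bil_ev_le hj)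
  have := (Finset.sum_eq_zero_iff_of_nonpos hle).1 h i (Finset.mem_univ i)
  rcases mul_eq_zero.1 this with h1 | h1
  · exact absurd h1 hi
  · exact h1

/-- The terminal configuration: `α` equals `n τ` on the support of `τ`, and the rest of `α`
is glued to it by a single edge `c - u`. -/
structure Term (Q : FinQuiver) (τ α : Q.I → ℤ) (u c : Q.I) (n : ℤ) : Prop where
  hu : τ u = 0
  hα : α u = 1
  hc : τ c = 1
  hcu : Q.bil (Q.ev c) (Q.ev u) = -1
  hou : ∀ i, τ i ≠ 0 → i ≠ c → Q.bil (Q.ev i) (Q.ev u) = 0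
  hna : ∀ i k, τ i ≠ 0 → τ k = 0 → k ≠ u → α k ≠ 0 → Q.bil (Q.ev i) (Q.ev k) = 0
  hn : 1 ≤ n
  hS : ∀ i, τ i ≠ 0 → α i = n * τ i

/-- restriction to the support of `τ` -/
def resS (τ x : Q.I → ℤ) : Q.I → ℤ := fun i => if τ i = 0 then 0 else x i
/-- restriction to the complement of the support of `τ` -/
def resO (τ x : Q.I → ℤ) : Q.I → ℤ := fun i => if τ i = 0 then x i else 0

lemma resS_of {τ x : Q.I → ℤ} {i : Q.I} (h : τ i ≠ 0) : resS τ x i = x i := by simp [resS, h]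
lemma resS_zero {τ x : Q.I → ℤ} {i : Q.I} (h : τ i = 0) : resS τ x i = 0 := by simp [resS, h]
lemma resO_of {τ x : Q.I → ℤ} {i : Q.I} (h : τ i = 0) : resO τ x i = x i := by simp [resO, h]
lemma resO_zero {τ x : Q.I → ℤ} {i : Q.I} (h : τ i ≠ 0) : resO τ x i = 0 := by simp [resO, h]
lemma res_add (τ x : Q.I → ℤ) : resS τ x + resO τ x = x := by
  funext i; by_cases h : τ i = 0 <;> simp [resS, resO, h]

lemma Term.bil_glue {τ α : Q.I → ℤ} {u c : Q.I} {n : ℤ} (T : Q.Term τ α u c n) {x z : Q.I → ℤ}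
    (hx : ∀ i, τ i = 0 → x i = 0) (hz : ∀ i, τ i ≠ 0 → z i = 0) (hzu : z u = 1)
    (hzα : ∀ i, z i ≠ 0 → α i ≠ 0) : Q.bil x z = - x c := by
  rw [bil_eq_right, Finset.sum_eq_single u]
  · rw [hzu, one_mul, bil_eq_left, Finset.sum_eq_single c, T.hcu]
    · ring
    · intro i _ hi
      by_cases h : τ i = 0
      · simp [hx i h]
      · simp [T.hou i h hi]
    · simp
  · intro k _ hk
    by_cases h : z k = 0
    · simp [h]
    · have hk0 : τ k = 0 := by by_contra h'; exact h (hz k h')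
      have : Q.bil x (Q.ev k) = 0 := by
        rw [bil_eq_left]
        apply Finset.sum_eq_zero
        intro i _
        by_cases h1 : τ i = 0
        · simp [hx i h1]
        · simp [T.hna i k h1 hk0 hk (hzα k h)]
      simp [this]
  · simp

lemma le_of_family {α : Q.I → ℤ} {ι : Type} {J : Finset ι} {β : ι → Q.I → ℤ}
    (hβ : ∀ j ∈ J, ∀ i, 0 ≤ β j i) (hs : ∑ j ∈ J, β j = α) {j : ι} (hj : j ∈ J) (i : Q.I) :
    β j i ≤ α i := by
  rw [← hs, Finset.sum_apply]
  exact Finset.single_le_sum (f := fun j => β j i) (fun k hk => hβ k hk i) hj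

lemma Term.split {τ α : Q.I → ℤ} {u c : Q.I} {n : ℤ} (T : Q.Term τ α u c n)
    {ι : Type} {J : Finset ι} {β : ι → Q.I → ℤ}
    (hβ : ∀ j ∈ J, Q.IsPosRoot (β j)) (hs : ∑ j ∈ J, β j = α) :
    ∃ j0 ∈ J, β j0 u = 1 ∧ ∃ JS ⊆ J, (∀ j ∈ JS, ∀ i, τ i = 0 → β j i = 0) ∧
      ∑ j ∈ JS, β j = n • τ - resS τ (β j0) := by
  classical
  have hle : ∀ j ∈ J, ∀ i, β j i ≤ α i := fun j hj i =>
    le_of_family (fun k hk => (hβ k hk).nonneg) hs hj i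
  have hpt : ∀ i, ∑ j ∈ J, β j i = α i := fun i => by rw [← hs, Finset.sum_apply]
  have hex : ∃ j0 ∈ J, β j0 u ≠ 0 := by
    by_contra h
    push Not at h
    have := hpt u
    rw [Finset.sum_eq_zero h, T.hα] at this
    omega
  obtain ⟨j0, hj0, hj0u⟩ := hex
  have hu1 : β j0 u = 1 := by
    have h1 := hle j0 hj0 u
    have h2 := (hβ j0 hj0).nonneg u
    rw [T.hα] at h1
    omega
  have hrest : ∀ j ∈ J.erase j0, β j u = 0 := by
    have h1 := hpt u
    rw [← Finset.add_sum_erase J (fun j => β j u) hj0, T.hα, hu1] at h1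
    have h2 : ∑ j ∈ J.erase j0, β j u = 0 := by linarith
    exact (Finset.sum_eq_zero_iff_of_nonneg
      (fun j hj => (hβ j (Finset.mem_of_mem_erase hj)).nonneg u)).1 h2
  refine ⟨j0, hj0, hu1, (J.erase j0).filter (fun j => ∀ i, τ i = 0 → β j i = 0), ?_, ?_, ?_⟩
  · exact (Finset.filter_subset _ _).trans (Finset.erase_subset _ _)
  · intro j hj
    exact (Finset.mem_filter.1 hj).2
  · funext i
    rw [Finset.sum_apply]
    by_cases hi : τ i = 0
    · have hz : ∀ j ∈ (J.erase j0).filter (fun j => ∀ i, τ i = 0 → β j i = 0), β j i = 0 :=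
        fun j hj => (Finset.mem_filter.1 hj).2 i hi
      rw [Finset.sum_eq_zero hz]
      simp [resS, hi]
    · have h1 : ∑ j ∈ (J.erase j0).filter (fun j => ∀ i, τ i = 0 → β j i = 0), β j i
          = ∑ j ∈ J.erase j0, β j i := by
        apply Finset.sum_subset (Finset.filter_subset _ _)
        intro j hj hj'
        have hjJ := Finset.mem_of_mem_erase hj
        rcases (hβ j hjJ).conn {i | τ i ≠ 0} (by
          intro a ha b hb _ hb0
          have hb' : τ b = 0 := by simpa using hb
          refine T.hna a b ha hb' ?_ ?_
          · rintro rfl; exact hb0 (hrest j hj)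
          · have h1 := hle j hjJ b
            have h2 := (hβ j hjJ).nonneg b
            omega) with h | h
        · exact h i hi
        · exact absurd (Finset.mem_filter.2 ⟨hj, fun k hk => h k (by simpa using hk)⟩) hj'
      have h2 := hpt i
      rw [← Finset.add_sum_erase J (fun j => β j i) hj0, T.hS i hi] at h2
      rw [h1]
      simp only [Pi.sub_apply, Pi.smul_apply, smul_eq_mul, resS_of hi]
      linarith
end Fin1
section Fin2
variable {Q : FinQuiver} {K : Type} [Field K] [CharZero K] {l : Q.I → K}

lemma Term.end2 {τ α : Q.I → ℤ} {u c : Q.I} (T : Q.Term τ α u c 1) (hS : τ ∈ Q.SigmaSet K l) :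
    Key l α := by
  refine ⟨τ, hS, ?_⟩
  intro ι J β hβ hs
  have hR : ∀ j ∈ J, Q.IsPosRoot (β j) := fun j hj => (hβ j hj).1.1
  have hτ : ∀ i, 0 ≤ τ i := hS.1.1.nonneg
  obtain ⟨j0, hj0, hu1, JS, hJS, hJS0, hsum⟩ := T.split hR hs
  set γ := β j0 with hγ
  have hγR : Q.IsPosRoot γ := hR j0 hj0
  have hγ0 := hγR.nonneg
  have hγα : ∀ i, γ i ≠ 0 → α i ≠ 0 := fun i hi => by
    have h1 : γ i ≤ α i := le_of_family (fun k hk => (hR k hk).nonneg) hs hj0 i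
    have h2 := hγ0 i
    omega
  have hγc : γ c ≤ 1 := by
    have h1 := le_of_family (fun k hk => (hR k hk).nonneg) hs hj0 c
    rw [T.hS c (by rw [T.hc]; decide), T.hc] at h1
    linarith
  by_cases hc0 : γ c = 0
  · refine ⟨JS, hJS, ?_⟩
    have hz : ∀ i, τ i ≠ 0 → γ i = 0 := by
      rcases hγR.conn {i | τ i ≠ 0} (by
        intro a ha b hb ha0 hb0
        have hb' : τ b = 0 := by simpa using hb
        by_cases hbu : b = u
        · subst hbu
          exact T.hou a ha (by rintro rfl; exact ha0 hc0)
        · exact T.hna a b ha hb' hbu (hγα b hb0)) with h | h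
      · exact fun i hi => h i hi
      · have := h u (by simp [T.hu])
        omega
    rw [hsum, one_smul]
    have : resS τ γ = 0 := by
      funext i
      by_cases h : τ i = 0
      · simp [resS, h]
      · simp [resS, h, hz i h]
    rw [this, sub_zero]
  · exfalso
    have hc1 : γ c = 1 := by have := hγ0 c; omega
    have hcτ : τ c ≠ 0 := by rw [T.hc]; decide
    have h1 : Q.IsPosRoot (resS τ γ) := by
      refine lemC (S := {i | τ i = 0 ∧ γ i ≠ 0}) (u := c) (x := γ) ?_ hγR hc1 ?_ ?_ ?_ ?_ ?_
      · simp [T.hc]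
      · intro i; unfold resS; split_ifs <;> simp [hγ0 i]
      · intro i hi
        by_cases h : τ i = 0
        · have : γ i = 0 := by by_contra h'; exact hi ⟨h, h'⟩
          simp [resS, h, this]
        · exact resS_of h
      · rintro s ⟨hs1, hs2⟩ i hi hic hγi
        have hτi : τ i ≠ 0 := fun h => hi ⟨h, hγi⟩
        rw [bil_comm]
        by_cases hsu : s = u
        · subst hsu; exact T.hou i hτi hic
        · exact T.hna i s hτi hs1 hsu (hγα s hs2)
      · rintro i ⟨hi1, _⟩
        refine bil_ev_nonpos_of_zero ?_ (resS_zero hi1)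
        intro i; unfold resS; split_ifs <;> simp [hγ0 i]
      · intro T' hT' _ i hi
        exact resS_zero (hT' hi).1
    have h2 : Q.IsPosRoot (resO τ γ) := by
      refine lemC (S := {i | τ i ≠ 0}) (u := u) (x := γ) ?_ hγR hu1 ?_ ?_ ?_ ?_ ?_
      · simp [T.hu]
      · intro i; unfold resO; split_ifs <;> simp [hγ0 i]
      · intro i hi
        exact resO_of (by simpa using hi)
      · intro s hs1 i hi hiu hγi
        exact T.hna s i hs1 (by simpa using hi) hiu (hγα i hγi)
      · intro i hi
        refine bil_ev_nonpos_of_zero ?_ (resO_zero hi)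
        intro i; unfold resO; split_ifs <;> simp [hγ0 i]
      · intro T' hT' _ i hi
        exact resO_zero (hT' hi)
    have hpS : Q.pair K l (resS τ γ) = 0 := by
      have : resS τ γ = τ - ∑ j ∈ JS, β j := by rw [hsum]; simp
      rw [this, pair_sub, hS.1.2, pair_sum, Finset.sum_eq_zero (fun j hj => (hβ j (hJS hj)).1.2)]
      simp
    have hpO : Q.pair K l (resO τ γ) = 0 := by
      have h := (hβ j0 hj0).1.2
      rw [← hγ, ← res_add τ γ, pair_add, hpS, zero_add] at h
      exact h
    have hb : Q.bil (resS τ γ) (resO τ γ) = -1 := by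
      rw [T.bil_glue (fun i hi => resS_zero hi) (fun i hi => resO_zero hi)
        (by rw [resO_of T.hu, hu1]) ?_, resS_of hcτ, hc1]
      intro i hi
      apply hγα
      intro h
      apply hi
      unfold resO; split_ifs <;> simp [h]
    have hlt := Sigma_lt_two (hβ j0 hj0) (y := resS τ γ) (z := resO τ γ) ⟨h1, hpS⟩ ⟨h2, hpO⟩
      (res_add τ γ).symm
    have hpp := pp_add (resS τ γ) (resO τ γ)
    rw [res_add, hb] at hpp
    linarith

lemma Term.end1 {τ α : Q.I → ℤ} {u c : Q.I} {n : ℤ} (T : Q.Term τ α u c n)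
    (hS : τ ∈ Q.SigmaSet K l) (hF : Q.InFund τ) (h0 : Q.bil τ τ = 0) :
    Key l α := by
  refine ⟨τ, hS, ?_⟩
  intro ι J β hβ hs
  have hR : ∀ j ∈ J, Q.IsPosRoot (β j) := fun j hj => (hβ j hj).1.1
  have hτ : ∀ i, 0 ≤ τ i := hS.1.1.nonneg
  obtain ⟨j0, hj0, hu1, JS, hJS, hJS0, hsum⟩ := T.split hR hs
  set γ := β j0 with hγ
  have hγR : Q.IsPosRoot γ := hR j0 hj0
  have hγ0 := hγR.nonneg
  have hγα : ∀ i, γ i ≠ 0 → α i ≠ 0 := fun i hi => by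
    have h1 : γ i ≤ α i := le_of_family (fun k hk => (hR k hk).nonneg) hs hj0 i
    have h2 := hγ0 i
    omega
  have hcτ : τ c ≠ 0 := by rw [T.hc]; decide
  have hglue : ∀ x : Q.I → ℤ, (∀ i, τ i = 0 → x i = 0) → Q.bil x (resO τ γ) = - x c := by
    intro x hx
    refine T.bil_glue hx (fun i hi => resO_zero hi) (by rw [resO_of T.hu, hu1]) ?_
    intro i hi
    apply hγα
    intro h
    apply hi
    unfold resO; split_ifs <;> simp [h]
  have hτS : ∀ x : Q.I → ℤ, (∀ i, τ i = 0 → x i = 0) → Q.bil τ x = 0 := by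
    intro x hx
    exact (InU_affine hF h0 (fun i hi h => hi (hx i h))).bil
  have hτγ : Q.bil τ γ = -1 := by
    conv_lhs => rw [← res_add τ γ, bil_add_right]
    rw [hglue τ (fun i hi => hi), hτS _ (fun i hi => resS_zero hi), T.hc]
    norm_num
  rcases JS.eq_empty_or_nonempty with hE | hN
  · exfalso
    rw [hE, Finset.sum_empty] at hsum
    have hγS : ∀ i, τ i ≠ 0 → γ i = n * τ i := by
      intro i hi
      have := congrFun hsum i
      simp only [Pi.zero_apply, Pi.sub_apply, Pi.smul_apply, smul_eq_mul, resS_of hi] at this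
      linarith
    have hy0 : ∀ i, 0 ≤ (γ - τ) i := by
      intro i
      by_cases hi : τ i = 0
      · simp [hi, hγ0 i]
      · have := hτ i
        have hn := T.hn
        simp only [Pi.sub_apply, hγS i hi]
        nlinarith
    have hyS : ∀ i, τ i ≠ 0 → (γ - τ) i = (n - 1) * τ i := by
      intro i hi
      simp only [Pi.sub_apply, hγS i hi]
      ring
    have hy : Q.IsPosRoot (γ - τ) := by
      refine lemC (S := {i | τ i ≠ 0}) (u := u) (x := γ) ?_ hγR hu1 hy0 ?_ ?_ ?_ ?_
      · simp [T.hu]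
      · intro i hi
        have : τ i = 0 := by simpa using hi
        simp [this]
      · intro s hs1 i hi hiu hγi
        exact T.hna s i hs1 (by simpa using hi) hiu (hγα i hγi)
      · intro i hi
        have e : γ - τ = (n - 1) • τ + resO τ γ := by
          funext k
          by_cases hk : τ k = 0
          · simp [hk, resO]
          · rw [hyS k hk]; simp [hk, resO]
        rw [e, bil_add_left, bil_smul_left, affine_null hF h0 i hi, mul_zero, zero_add]
        refine bil_ev_nonpos_of_zero ?_ (resO_zero hi)
        intro i; unfold resO; split_ifs <;> simp [hγ0 i]
      · intro T' hT' hsep i hi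
        rw [hyS i (hT' hi)]
        by_cases hn1 : n = 1
        · simp [hn1]
        have hn' : n - 1 ≠ 0 := fun h => hn1 (by linarith)
        have hne : ∀ k, τ k ≠ 0 → (γ - τ) k ≠ 0 := fun k hk => by
          rw [hyS k hk]; exact mul_ne_zero hn' hk
        have huT : u ∉ T' := fun h => hT' h T.hu
        have hcT : c ∉ T' := by
          intro h
          have := hsep c h u huT (hne c hcτ) (by simp [T.hu, hu1])
          rw [T.hcu] at this
          omega
        rcases hF.conn T' (fun a ha b hb ha0 hb0 => hsep a ha b hb (hne a ha0) (hne b hb0)) with h | h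
        · exact absurd (h i hi) (hT' hi)
        · exact absurd (h c hcT) hcτ
    have hpy : Q.pair K l (γ - τ) = 0 := by
      rw [pair_sub, (hβ j0 hj0).1.2, hS.1.2, sub_zero]
    have hlt := Sigma_lt_two (hβ j0 hj0) (y := τ) (z := γ - τ) hS.1 ⟨hy, hpy⟩ (by simp [hγ])
    have hpp := pp_add τ (γ - τ)
    rw [add_sub_cancel, bil_sub_right, hτγ, h0] at hpp
    linarith
  · obtain ⟨C, hC, hCs⟩ := lemSub hS hF h0 JS β hN (fun j hj => hβ j (hJS hj))
      (fun j hj => InU_affine hF h0 (fun i hi h => hi (hJS0 j hj i h))) (by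
        intro x hxR hxU hxτ hx2
        have hxz : ∀ i, τ i = 0 → x i = 0 := fun i hi => by
          by_contra h; exact (hxU i h).1 hi
        have hτx : Q.bil τ x = 0 := hτS x hxz
        have hxτ0 : Q.bil x τ = 0 := by rw [bil_comm]; exact hτx
        have hy : Q.IsPosRoot (τ - x) := by
          refine R2 hF (fun i => sub_nonneg.2 (hxτ i)) (InU_affine hF h0 ?_) ?_
          · intro i hi h
            apply hi
            simp [h, hxz i h]
          · rw [bil_sub_left, bil_sub_right, bil_sub_right, h0, hτx, hxτ0, hx2]; norm_num
        have hyR : τ - x ∈ Q.Rplus K l := ⟨hy, by rw [pair_sub, hS.1.2, hxR.2, sub_zero]⟩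
        obtain ⟨m, σ, hσ, hσs, _⟩ := exists_family hyR
        have hle : Q.bil (τ - x) γ ≤ 0 := by
          rw [← hσs, bil_sum_left]
          apply Finset.sum_nonpos
          intro j _
          apply Sigma_bil_nonpos (hσ j) (hβ j0 hj0)
          intro h
          have h1 := le_of_family (fun k _ => (hσ k).1.1.nonneg) hσs (Finset.mem_univ j) u
          rw [h, ← hγ, hu1] at h1
          simp [T.hu, hxz u T.hu] at h1
        rw [bil_sub_left, hτγ] at hle
        have e : Q.bil x γ = Q.bil x (resS τ γ) - x c := by
          conv_lhs => rw [← res_add τ γ, bil_add_right, hglue x hxz]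
          ring
        rw [hsum, bil_sub_right, bil_smul_right, hxτ0]
        have := hxR.1.nonneg c
        linarith)
    exact ⟨C, hC.trans hJS, hCs⟩
end Fin2

end Part6

section Part7

section Fin3
variable {Q : FinQuiver} {K : Type} [Field K] [CharZero K] {l : Q.I → K}

lemma exists_mult {τ ρ : Q.I → ℤ} (hτ : ∀ i, 0 ≤ τ i) (h0 : τ ≠ 0) (hρ : ∀ i, 0 ≤ ρ i) :
    ∃ m : ℕ, (∀ i, (m : ℤ) * τ i ≤ ρ i) ∧ ¬ ∀ i, ((m : ℤ) + 1) * τ i ≤ ρ i := by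
  by_contra hcon
  push Not at hcon
  have hall : ∀ m : ℕ, ∀ i, (m : ℤ) * τ i ≤ ρ i := by
    intro m
    induction m with
    | zero => intro i; simpa using hρ i
    | succ m ih => intro i; have := hcon m ih i; push_cast; exact this
  obtain ⟨i, hi⟩ : ∃ i, τ i ≠ 0 := by
    by_contra h
    push Not at h
    exact h0 (funext h)
  have h1 := hall (ρ i + 1).toNat i
  have h2 : ((ρ i + 1).toNat : ℤ) = ρ i + 1 := Int.toNat_of_nonneg (by have := hρ i; omega)
  rw [h2] at h1
  have h3 : 1 ≤ τ i := by have := hτ i; omega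
  have := hρ i
  nlinarith

lemma uniq_vertex {τ ρ : Q.I → ℤ} (hF : Q.InFund τ) (hρ : ∀ i, 0 ≤ ρ i)
    (h : Q.bil τ ρ = -1) : ∃ u, ρ u = 1 ∧ Q.bil τ (Q.ev u) = -1 ∧
      ∀ i, i ≠ u → ρ i ≠ 0 → Q.bil τ (Q.ev i) = 0 := by
  rw [bil_eq_right] at h
  obtain ⟨u, _, hu, hr⟩ := sum_eq_neg_one Finset.univ _
    (fun i _ => mul_nonpos_of_nonneg_of_nonpos (hρ i) (hF.2.2.2 i)) h
  refine ⟨u, ?_, ?_, ?_⟩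
  · have h1 := hρ u
    have h2 := Int.isUnit_iff.1 (IsUnit.of_mul_eq_one (-(Q.bil τ (Q.ev u)))
      (show ρ u * (-(Q.bil τ (Q.ev u))) = 1 by linarith))
    omega
  · have h1 := hF.2.2.2 u
    have h2 := Int.isUnit_iff.1 (IsUnit.of_mul_eq_one (-(ρ u))
      (show Q.bil τ (Q.ev u) * (-(ρ u)) = 1 by linarith))
    omega
  · intro i hi h0
    exact (mul_eq_zero.1 (hr i (Finset.mem_univ i) hi)).resolve_left h0

lemma exists_term {τ α : Q.I → ℤ} {u : Q.I} (hS : τ ∈ Q.SigmaSet K l) (hF : Q.InFund τ)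
    (hle : ∀ i, 0 ≤ (α - τ) i)
    (hα : ∀ i, τ i ≠ 0 → Q.bil τ (Q.ev i) = 0 → Q.bil α (Q.ev i) ≤ 0)
    (hu0 : τ u = 0) (hu1 : (α - τ) u = 1) (hbu : Q.bil τ (Q.ev u) = -1)
    (hr : ∀ i, i ≠ u → (α - τ) i ≠ 0 → Q.bil τ (Q.ev i) = 0) :
    ∃ c n, Q.Term τ α u c n := by
  have hτ := hF.2.1
  have h := hbu
  rw [bil_eq_left] at h
  obtain ⟨c, _, hc, hro⟩ := sum_eq_neg_one Finset.univ _ (fun i _ => by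
    by_cases hi : i = u
    · rw [hi, hu0]; simp
    · exact mul_nonpos_of_nonneg_of_nonpos (hτ i) (bil_ev_le hi)) h
  have hcu' : c ≠ u := by
    rintro rfl
    rw [hu0] at hc
    simp at hc
  have hcle := bil_ev_le hcu'
  have hc1 : τ c = 1 := by
    have h1 := hτ c
    have h2 := Int.isUnit_iff.1 (IsUnit.of_mul_eq_one (-(Q.bil (Q.ev c) (Q.ev u)))
      (show τ c * (-(Q.bil (Q.ev c) (Q.ev u))) = 1 by linarith))
    omega
  have hcu : Q.bil (Q.ev c) (Q.ev u) = -1 := by rw [hc1] at hc; linarith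
  have hou : ∀ i, τ i ≠ 0 → i ≠ c → Q.bil (Q.ev i) (Q.ev u) = 0 := fun i hi hic =>
    (mul_eq_zero.1 (hro i (Finset.mem_univ i) hic)).resolve_left hi
  have hαu : α u = 1 := by
    simp only [Pi.sub_apply, hu0] at hu1
    linarith
  have hna : ∀ i k, τ i ≠ 0 → τ k = 0 → k ≠ u → α k ≠ 0 → Q.bil (Q.ev i) (Q.ev k) = 0 := by
    intro i k hi hk hku hαk
    refine nonadj_of_zero hτ hk (hr k hku ?_) i hi
    simpa [hk] using hαk
  obtain ⟨m, hm1, hm2⟩ := exists_mult hτ hF.1 hle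
  set b : Q.I → ℤ := resS τ (α - τ) - (m : ℤ) • τ with hb
  have hbS : ∀ i, τ i ≠ 0 → b i = α i - τ i - m * τ i := by
    intro i hi
    simp [hb, resS, hi]
  have hbO : ∀ i, τ i = 0 → b i = 0 := by
    intro i hi
    simp [hb, resS, hi]
  have hb0 : b = 0 := by
    refine N2 hS hF (c := c) ?_ ?_ ?_ hc1 ?_
    · intro i
      by_cases hi : τ i = 0
      · rw [hbO i hi]
      · rw [hbS i hi]
        have := hm1 i
        simp only [Pi.sub_apply] at this
        linarith
    · intro i hi
      have hτi : τ i ≠ 0 := fun h => hi (hbO i h)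
      refine ⟨hτi, hr i (fun h => hτi (h ▸ hu0)) ?_⟩
      intro h
      apply hi
      have h1 := hm1 i
      have h2 := hτ i
      have h3 : (0:ℤ) ≤ m * τ i := by positivity
      rw [hbS i hτi]
      simp only [Pi.sub_apply] at h h1
      omega
    · intro hcon
      apply hm2
      intro i
      by_cases hi : τ i = 0
      · rw [hi, mul_zero]; exact hle i
      · have := hcon i
        rw [hbS i hi] at this
        simp only [Pi.sub_apply]
        linarith
    · intro i hi hi0
      have e : α = ((m : ℤ) + 1) • τ + b + resO τ α := by
        funext k
        by_cases hk : τ k = 0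
        · simp [hk, hbO k hk, resO]
        · simp only [Pi.add_apply, Pi.smul_apply, smul_eq_mul, hbS k hk, resO_zero hk]
          ring
      have h1 := hα i hi hi0
      have h2 : Q.bil (resO τ α) (Q.ev i) = - Q.ev c i := by
        rw [bil_eq_left, Finset.sum_eq_single u]
        · rw [resO_of hu0, hαu, one_mul, bil_comm]
          by_cases hic : i = c
          · rw [hic, hcu, ev_self]
          · rw [hou i hi hic, ev_ne hic, neg_zero]
        · intro k _ hk
          by_cases hk0 : τ k = 0
          · rw [resO_of hk0]
            by_cases hαk : α k = 0
            · rw [hαk, zero_mul]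
            · rw [bil_comm, hna i k hi hk0 hk hαk, mul_zero]
          · rw [resO_zero hk0, zero_mul]
        · simp
      rw [e, bil_add_left, bil_add_left, bil_smul_left, hi0, h2] at h1
      linarith
  refine ⟨c, (m : ℤ) + 1, hu0, hαu, hc1, hcu, hou, hna, by omega, ?_⟩
  intro i hi
  have := hbS i hi
  rw [hb0] at this
  simp only [Pi.zero_apply] at this
  linarith

/-- the two situations in which the main lemma applies -/
def Cond (l : Q.I → K) (τ α : Q.I → ℤ) : Prop :=
  (Q.bil τ τ = 0 ∧ -1 ≤ Q.bil τ α) ∨ (Q.bil τ τ < 0 ∧ Q.bil τ (α - τ) = -1 ∧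
    ∃ τ' ∈ Q.SigmaSet K l, Q.bil τ' τ' < 0 ∧ α - τ - τ' ∈ Q.NRplus K l)

lemma terminal {τ α : Q.I → ℤ} (hS : τ ∈ Q.SigmaSet K l) (hF : Q.InFund τ)
    (hαR : α ∈ Q.Rplus K l) (hle : ∀ i, 0 ≤ (α - τ) i)
    (hα : ∀ i, τ i ≠ 0 → Q.bil τ (Q.ev i) = 0 → Q.bil α (Q.ev i) ≤ 0)
    (hC : Cond l τ α) : Key l α := by
  have hτ := hF.2.1
  have hne : ∃ i, τ i ≠ 0 := by
    by_contra h
    push Not at h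
    exact hF.1 (funext h)
  obtain ⟨i0, hi0⟩ := hne
  have hα0 : ∀ i, τ i ≠ 0 → α i ≠ 0 := fun i hi => by
    have h1 := hle i
    have h2 := hτ i
    simp only [Pi.sub_apply] at h1
    omega
  -- if everything outside the support is non-adjacent, `α` lives on the support
  have hconn : (∀ k, τ k = 0 → α k ≠ 0 → Q.bil τ (Q.ev k) = 0) → ∀ k, τ k = 0 → α k = 0 := by
    intro hk
    rcases hαR.1.conn {i | τ i ≠ 0} (by
      intro a ha b hb _ hb0
      have hb' : τ b = 0 := by simpa using hb
      exact nonadj_of_zero hτ hb' (hk b hb' hb0) a ha) with h | h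
    · exact absurd (h i0 hi0) (hα0 i0 hi0)
    · exact fun k hk => h k (by simpa using hk)
  have hle0 : Q.bil τ (α - τ) ≤ 0 := bil_nonpos_of_nonneg hle (fun i _ => hF.2.2.2 i)
  rcases hC with ⟨h0, h1⟩ | ⟨h0, h1, τ', hτ', hτ'0, hτ'α⟩
  · have h1' : -1 ≤ Q.bil τ (α - τ) := by rw [bil_sub_right, h0]; linarith
    by_cases hz : Q.bil τ (α - τ) = 0
    · have hz' := hz
      rw [bil_eq_right] at hz'
      have hterm := (Finset.sum_eq_zero_iff_of_nonpos
        (fun i _ => mul_nonpos_of_nonneg_of_nonpos (hle i) (hF.2.2.2 i))).1 hz'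
      have hsupp := hconn (fun k hk hαk =>
        (mul_eq_zero.1 (hterm k (Finset.mem_univ k))).resolve_left (by simpa [hk] using hαk))
      refine ⟨τ, hS, ?_⟩
      intro ι J β hβ hs
      have hle' : ∀ j ∈ J, ∀ i, β j i ≤ α i := fun j hj i =>
        le_of_family (fun k hk => (hβ k hk).1.1.nonneg) hs hj i
      refine lemSub hS hF h0 J β ?_ hβ ?_ ?_
      · by_contra hJ
        rw [Finset.not_nonempty_iff_eq_empty] at hJ
        rw [hJ, Finset.sum_empty] at hs
        exact hαR.1.2.2 hs.symm
      · intro j hj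
        refine InU_affine hF h0 ?_
        intro i hi h
        have h2 := hle' j hj i
        have h3 := (hβ j hj).1.1.nonneg i
        rw [hsupp i h] at h2
        omega
      · intro x hx hxU _ _
        rw [hs, bil_comm]
        have := bil_nonpos_of_nonneg hx.1.nonneg (fun i hi => hα i (hxU i hi).1 (hxU i hi).2)
        linarith
    · have hm : Q.bil τ (α - τ) = -1 := by omega
      obtain ⟨u, hu1, hbu, hr⟩ := uniq_vertex hF hle hm
      have hu0 : τ u = 0 := by
        by_contra h
        have := affine_null hF h0 u h
        omega
      obtain ⟨c, n, T⟩ := exists_term hS hF hle hα hu0 hu1 hbu hr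
      exact T.end1 hS hF h0
  · obtain ⟨u, hu1, hbu, hr⟩ := uniq_vertex hF hle h1
    have hu0 : τ u = 0 := by
      by_contra hu
      have hsupp := hconn (fun k hk hαk => hr k (fun h => hu (h ▸ hk)) (by simpa [hk] using hαk))
      have hτ'le : ∀ i, τ' i ≤ (α - τ) i := fun i => by
        have := (NRplus_props hτ'α).1 i
        simp only [Pi.sub_apply] at this ⊢
        linarith
      have hτ'n := hτ'.1.1.nonneg
      have hz : ∀ i, τ i = 0 → τ' i = 0 := fun i hi => by
        have h2 := hτ'le i
        have h3 := hτ'n i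
        simp only [Pi.sub_apply, hi, hsupp i hi] at h2
        omega
      have hG := G2_lower (x := τ') hτ (fun i hi h => hi (hz i h))
      rw [Finset.sum_eq_single u] at hG
      · have hev := bil_self_even τ'
        have hle2 : Q.bil τ' τ' ≤ -2 := by omega
        have hle2' : ((Q.bil τ' τ' : ℤ) : ℚ) ≤ -2 := by exact_mod_cast hle2
        rw [hbu] at hG
        have hd : ((τ' u : ℚ) / τ u) * τ u = τ' u := div_mul_cancel₀ _ (by exact_mod_cast hu)
        have ht1 : (1 : ℚ) ≤ τ u := by
          have := hτ u
          exact_mod_cast (show 1 ≤ τ u by omega)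
        have ht2 : (0 : ℚ) ≤ τ' u := by exact_mod_cast hτ'n u
        have ht3 : (τ' u : ℚ) ≤ 1 := by
          have := hτ'le u
          rw [hu1] at this
          exact_mod_cast this
        have hq0 : 0 ≤ (τ' u : ℚ) / τ u := by positivity
        have hq1 : (τ' u : ℚ) / τ u ≤ 1 := by
          rw [div_le_one (by linarith)]; linarith
        have hq : ((τ' u : ℚ) / τ u) * ((τ' u : ℚ) / τ u) * τ u ≤ 1 := by
          rw [mul_assoc, hd]
          nlinarith
        push_cast at hG
        linarith
      · intro i _ hi
        by_cases h2 : τ' i = 0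
        · simp [h2]
        · have : (α - τ) i ≠ 0 := by
            have h3 := hτ'le i
            have h4 := hτ'n i
            omega
          simp [hr i hi this]
      · simp
    obtain ⟨c, n, T⟩ := exists_term hS hF hle hα hu0 hu1 hbu hr
    have hn : n = 1 := by
      by_contra hn
      have hall : ∀ i, τ i ≠ 0 → Q.bil τ (Q.ev i) = 0 := by
        intro i hi
        refine hr i (fun h => hi (h ▸ hu0)) ?_
        simp only [Pi.sub_apply, T.hS i hi]
        intro h
        apply mul_ne_zero (sub_ne_zero.2 hn) hi
        linarith
      have : Q.bil τ τ = 0 := by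
        rw [bil_eq_right]
        apply Finset.sum_eq_zero
        intro i _
        by_cases hi : τ i = 0
        · simp [hi]
        · simp [hall i hi]
      omega
    subst hn
    exact T.end2 hS

lemma Cond.refl {i : Q.I} (hi : Q.Loopfree i) (hl : l i ≠ 0) {τ α : Q.I → ℤ}
    (h : Cond l τ α) : Cond (Q.coRefl K i l) (Q.refl i τ) (Q.refl i α) := by
  unfold Cond
  rw [← refl_sub, bil_refl hi, bil_refl hi, bil_refl hi]
  rcases h with h | ⟨h1, h2, τ', h3, h4, h5⟩
  · exact Or.inl h
  · refine Or.inr ⟨h1, h2, Q.refl i τ', Sigma_refl hi hl h3, by rwa [bil_refl hi], ?_⟩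
    rw [← refl_sub]
    exact NRplus_refl hi hl h5

lemma main_lemma : ∀ N : ℕ, ∀ M : ℕ, ∀ (l : Q.I → K) (τ α : Q.I → ℤ), τ ∈ Q.SigmaSet K l →
    α ∈ Q.Rplus K l → α - τ ∈ Q.NRplus K l → Q.bil τ τ ≤ 0 → Cond l τ α →
    Q.ht τ < N → Q.ht α < M → Key l α := by
  intro N
  induction N with
  | zero =>
    intro M l τ α hS _ _ _ _ h _
    have := Rplus_ht_pos hS.1
    simp at h
    omega
  | succ N ihN =>
    intro M
    induction M with
    | zero =>
      intro l τ α _ hα _ _ _ _ h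
      have := Rplus_ht_pos hα
      simp at h
      omega
    | succ M ihM =>
      intro l τ α hS hα hN h0 hC hhτ hhα
      push_cast at hhτ hhα
      have hτ0 := hS.1.1.nonneg
      by_cases h1 : ∃ i, 0 < Q.bil τ (Q.ev i)
      · obtain ⟨i, hi⟩ := h1
        obtain ⟨hlf, _⟩ := pos_of_bil_pos hτ0 hi
        have hli : l i ≠ 0 := by
          intro hl
          have hne : τ ≠ Q.ev i := by
            rintro rfl
            rw [bil_ev_self_loopfree hlf] at h0
            omega
          have := Sigma_bil_ev hS hlf hl hne
          omega
        refine Key_refl hlf hli (ihN (Q.ht (Q.refl i α) + 1).toNat _ (Q.refl i τ) _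
          (Sigma_refl hlf hli hS) (Rplus_refl hlf hli hα) ?_ ?_ (hC.refl hlf hli) ?_ ?_)
        · rw [← refl_sub]; exact NRplus_refl hlf hli hN
        · rwa [bil_refl hlf]
        · rw [ht_refl]; omega
        · have := Int.self_le_toNat (Q.ht (Q.refl i α) + 1)
          omega
      · push Not at h1
        have hF : Q.InFund τ := inFund_mk hτ0 hS.1.1.2.2 hS.1.1.conn h1
        by_cases h2 : ∃ i, Q.bil τ (Q.ev i) = 0 ∧ 0 < Q.bil α (Q.ev i)
        · obtain ⟨i, hi0, hi⟩ := h2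
          obtain ⟨hlf, _⟩ := pos_of_bil_pos hα.1.nonneg hi
          by_cases hl : l i = 0
          · exact Key_of_pos hlf hl hi
          · have hfix : Q.refl i τ = τ := by simp [FinQuiver.refl, hi0]
            refine Key_refl hlf hl (ihM _ (Q.refl i τ) _
              (Sigma_refl hlf hl hS) (Rplus_refl hlf hl hα) ?_ ?_ (hC.refl hlf hl) ?_ ?_)
            · rw [← refl_sub]; exact NRplus_refl hlf hl hN
            · rwa [bil_refl hlf]
            · rw [hfix]; push_cast; omega
            · rw [ht_refl]; omega
        · push Not at h2
          exact terminal hS hF hα (NRplus_props hN).1 (fun i _ h => h2 i h) hC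

end Fin3

end Part7

section Part8

section Fin4
variable {Q : FinQuiver} {K : Type} [Field K] [CharZero K] {l : Q.I → K}

/-- restriction of a vector to a set of vertices -/
def resT (T : Set Q.I) (x : Q.I → ℤ) : Q.I → ℤ := by
  classical exact fun i => if i ∈ T then x i else 0

lemma resT_of {T : Set Q.I} {x : Q.I → ℤ} {i : Q.I} (h : i ∈ T) : resT T x i = x i := by
  simp [resT, h]

lemma resT_zero {T : Set Q.I} {x : Q.I → ℤ} {i : Q.I} (h : i ∉ T) : resT T x i = 0 := by
  simp [resT, h]

lemma split_sum {α : Q.I → ℤ} {T : Set Q.I}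
    (hT : ∀ i ∈ T, ∀ j ∉ T, α i ≠ 0 → α j ≠ 0 → Q.bil (Q.ev i) (Q.ev j) = 0)
    {ι : Type} {J : Finset ι} {β : ι → Q.I → ℤ} (hβ : ∀ j ∈ J, Q.IsPosRoot (β j))
    (hs : ∑ j ∈ J, β j = α) : ∃ J' ⊆ J, ∑ j ∈ J', β j = resT T α := by
  classical
  refine ⟨J.filter (fun j => ∀ i ∉ T, β j i = 0), Finset.filter_subset _ _, ?_⟩
  funext i
  rw [Finset.sum_apply]
  by_cases hi : i ∈ T
  · rw [resT_of hi, ← hs, Finset.sum_apply]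
    apply Finset.sum_subset (Finset.filter_subset _ _)
    intro j hj hj'
    have hle : ∀ k, β j k ≠ 0 → α k ≠ 0 := fun k hk => by
      have h1 := le_of_family (fun m hm => (hβ m hm).nonneg) hs hj k
      have h2 := (hβ j hj).nonneg k
      omega
    rcases (hβ j hj).conn T (fun a ha b hb ha0 hb0 => hT a ha b hb (hle a ha0) (hle b hb0)) with h | h
    · exact h i hi
    · exact absurd (Finset.mem_filter.2 ⟨hj, h⟩) hj'
  · rw [resT_zero hi]
    apply Finset.sum_eq_zero
    intro j hj
    have := (Finset.mem_filter.1 hj).2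
    exact this i hi

lemma key_fund {α : Q.I → ℤ} (hF : Q.InFund α) (hp : Q.pair K l α = 0) : Key l α := by
  classical
  have hR : α ∈ Q.Rplus K l := ⟨hF.isPosRoot, hp⟩
  by_cases hαS : α ∈ Q.SigmaSet K l
  · exact ⟨α, hαS, fun ι J β _ hs => ⟨J, subset_rfl, hs⟩⟩
  obtain ⟨n, σ, hσ, hs, hpp⟩ := exists_family hR
  have hrest : ∀ t, α - σ t = ∑ j ∈ Finset.univ.erase t, σ j := by
    intro t
    rw [← hs, ← Finset.add_sum_erase Finset.univ σ (Finset.mem_univ t)]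
    simp
  have hN : ∀ t, α - σ t ∈ Q.NRplus K l := fun t => by
    rw [hrest t]; exact NRplus_sum (fun j _ => (hσ j).1)
  have hne : ∀ t, α - σ t ≠ 0 := by
    intro t h
    apply hαS
    rw [sub_eq_zero.1 h]
    exact hσ t
  by_cases hP1 : ∃ t, Q.bil (σ t) (σ t) = 0 ∧ -1 ≤ Q.bil (σ t) α
  · obtain ⟨t, ht⟩ := hP1
    exact main_lemma (Q.ht (σ t) + 1).toNat (Q.ht α + 1).toNat l (σ t) α (hσ t) hR (hN t)
      ht.1.le (Or.inl ht) (by have := Int.self_le_toNat (Q.ht (σ t) + 1); omega)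
      (by have := Int.self_le_toNat (Q.ht α + 1); omega)
  push Not at hP1
  set f : Fin n → ℤ := fun t => 2 - Q.bil (σ t) (σ t) + Q.bil (σ t) α with hf
  have hsum : 2 ≤ ∑ t, f t := by
    have e1 : ∑ t, f t = ∑ t, 2 * Q.pp (σ t) + Q.bil α α := by
      have : Q.bil α α = ∑ t, Q.bil (σ t) α := by
        conv_lhs => rw [← hs, bil_sum_left]
        rw [hs]
      rw [this, ← Finset.sum_add_distrib]
      apply Finset.sum_congr rfl
      intro t _
      have := bil_self_even (σ t)
      simp only [hf]
      omega
    rw [e1, ← Finset.mul_sum]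
    have := bil_self_even α
    linarith
  have hαle : ∀ t, Q.bil (σ t) α ≤ 0 := fun t => by
    rw [bil_comm]
    exact bil_nonpos_of_nonneg (hσ t).1.1.nonneg (fun i _ => hF.2.2.2 i)
  have hneg : ∀ t, Q.bil (σ t) (σ t) < 0 → Q.bil (σ t) (α - σ t) < 0 := by
    intro t ht
    by_contra h
    have := G1 hF (add_sub_cancel (σ t) α) (hσ t).1.1.nonneg (NRplus_props (hN t)).1
      (hσ t).1.1.2.2 (hne t) (not_lt.1 h)
    omega
  have hf1 : ∀ t, f t ≤ 1 ∧ (0 < f t → Q.bil (σ t) (σ t) < 0 ∧ Q.bil (σ t) (α - σ t) = -1) := by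
    intro t
    have h1 := hαle t
    have hsub : Q.bil (σ t) (α - σ t) = Q.bil (σ t) α - Q.bil (σ t) (σ t) := bil_sub_right _ _ _
    rcases (hσ t).1.1.sq with h2 | h2
    · simp only [hf]; constructor
      · omega
      · intro h; omega
    · rcases h2.lt_or_eq with h3 | h3
      · have := hneg t h3
        simp only [hf]; constructor
        · omega
        · intro h; exact ⟨h3, by omega⟩
      · have := hP1 t h3
        simp only [hf]; constructor
        · omega
        · intro h; omega
  obtain ⟨t, ht⟩ : ∃ t, 0 < f t := by
    by_contra h
    push Not at h
    have := Finset.sum_nonpos (s := Finset.univ) (fun t _ => h t)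
    omega
  obtain ⟨t', htt, ht'⟩ : ∃ t', t' ≠ t ∧ 0 < f t' := by
    by_contra h
    push Not at h
    rw [← Finset.add_sum_erase Finset.univ f (Finset.mem_univ t)] at hsum
    have := Finset.sum_nonpos (s := Finset.univ.erase t) (f := f)
      (fun j hj => h j (Finset.ne_of_mem_erase hj))
    have := (hf1 t).1
    omega
  have hN2 : α - σ t - σ t' ∈ Q.NRplus K l := by
    have : α - σ t - σ t' = ∑ j ∈ (Finset.univ.erase t).erase t', σ j := by
      rw [hrest t, ← Finset.add_sum_erase (Finset.univ.erase t) σ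
        (Finset.mem_erase.2 ⟨htt, Finset.mem_univ t'⟩)]
      simp
    rw [this]; exact NRplus_sum (fun j _ => (hσ j).1)
  obtain ⟨a1, a2⟩ := (hf1 t).2 ht
  exact main_lemma (Q.ht (σ t) + 1).toNat (Q.ht α + 1).toNat l (σ t) α (hσ t) hR (hN t)
      a1.le (Or.inr ⟨a1, a2, σ t', hσ t', ((hf1 t').2 ht').1, hN2⟩)
      (by have := Int.self_le_toNat (Q.ht (σ t) + 1); omega)
      (by have := Int.self_le_toNat (Q.ht α + 1); omega)

lemma key_aux : ∀ N : ℕ, ∀ (l : Q.I → K) (α : Q.I → ℤ), α ∈ Q.NRplus K l → α ≠ 0 →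
    Q.ht α < N → Key l α := by
  intro N
  induction N with
  | zero =>
    intro l α hα h0 h
    have := ht_pos (NRplus_props hα).1 h0
    simp at h
    omega
  | succ N ih =>
    intro l α hα h0 h
    push_cast at h
    obtain ⟨hα0, hp⟩ := NRplus_props hα
    by_cases h1 : ∃ i, 0 < Q.bil α (Q.ev i)
    · obtain ⟨i, hi⟩ := h1
      obtain ⟨hlf, _⟩ := pos_of_bil_pos hα0 hi
      by_cases hl : l i = 0
      · exact Key_of_pos hlf hl hi
      · refine Key_refl hlf hl (ih _ _ (NRplus_refl hlf hl hα) ?_ ?_)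
        · intro h'
          apply h0
          rw [← refl_refl hlf α, h', refl_zero]
        · rw [ht_refl]; omega
    push Not at h1
    by_cases hc : Q.Conn α
    · exact key_fund (inFund_mk hα0 h0 hc h1) hp
    · unfold Conn at hc
      push Not at hc
      obtain ⟨T, hT, ⟨a, ha, ha0⟩, ⟨b, hb, hb0⟩⟩ := hc
      have hN : resT T α ∈ Q.NRplus K l := by
        obtain ⟨n, σ, hσ, hs⟩ := exists_family_N hα
        obtain ⟨J', _, hJ'⟩ := split_sum hT (fun j _ => (hσ j).1.1) hs
        rw [← hJ']; exact NRplus_sum (fun j _ => (hσ j).1)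
      have hht : Q.ht (resT T α) < Q.ht α := by
        apply Finset.sum_lt_sum
        · intro i _
          by_cases hi : i ∈ T
          · rw [resT_of hi]
          · rw [resT_zero hi]; exact hα0 i
        · refine ⟨b, Finset.mem_univ b, ?_⟩
          rw [resT_zero hb]
          have := hα0 b
          omega
      obtain ⟨τ, hτ, hK⟩ := ih l (resT T α) hN (fun h' => ha0 (by
        rw [← resT_of ha (x := α), h']; rfl)) (by omega)
      refine ⟨τ, hτ, ?_⟩
      intro ι J β hβ hs
      obtain ⟨J', hJJ, hJ'⟩ := split_sum hT (fun j hj => (hβ j hj).1.1) hs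
      obtain ⟨C, hC, hCs⟩ := hK ι J' β (fun j hj => hβ j (hJJ hj)) hJ'
      exact ⟨C, hC.trans hJJ, hCs⟩

theorem key_theorem (α : Q.I → ℤ) (hα : α ∈ Q.NRplus K l) (h0 : α ≠ 0) : Key l α :=
  key_aux (Q.ht α + 1).toNat l α hα h0 (by have := Int.self_le_toNat (Q.ht α + 1); omega)

end Fin4

end Part8

end FinQuiver

/-- Any `α ∈ ℕR_λ^+` has a decomposition as a sum of elements of `Σ_λ`
which every other such decomposition refines (the refinement being given by the
fibres of a map `P` assigning each term of the other decomposition to a part). -/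
theorem stmt0 (Q : FinQuiver) (K : Type) [Field K] [CharZero K] [IsAlgClosed K]
    (l : Q.I → K) (α : Q.I → ℤ) (hα : α ∈ Q.NRplus K l) :
    ∃ (r : ℕ) (σ : Fin r → (Q.I → ℤ)),
      (∀ t, σ t ∈ Q.SigmaSet K l) ∧ α = ∑ t, σ t ∧
      ∀ (n : ℕ) (β : Fin n → (Q.I → ℤ)), (∀ j, β j ∈ Q.SigmaSet K l) →
        α = ∑ j, β j →
        ∃ P : Fin n → Fin r,
          ∀ t, σ t = ∑ j ∈ Finset.univ.filter (fun j => P j = t), β j := by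
  exact FinQuiver.stmt_of_Key (fun α h h0 => FinQuiver.key_theorem α h h0) α hα

end
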